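/- arXiv:1609.01782 — 4 statements merged into one kernel-verified Lean document; each statement's English description precedes it below -/
import Mathlib

section
/- For all n ≥ 1: the set Av_n(123,231,312) has exactly n elements, the corresponding n points (σ(1),…,σ(n)) ∈ ℝ^n are affinely independent (so P_n(123,231,312) is an (n−1)-dimensional simplex), and lim_{m→∞} |m·P_n(123,231,312) ∩ ℤ^n| / m^{n−1} = n^{n−2}/(n−1)! (equivalently, the normalized volume of P_n(123,231,312) is n^{n−2}). -/
open Pointwise

/-- `σ` contains the pattern `π`. -/
def containsPattern {n k : ℕ} (σ : Equiv.Perm (Fin n)) (π : Equiv.Perm (Fin k)) : Prop :=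
  ∃ f : Fin k → Fin n, StrictMono f ∧ ∀ a b : Fin k, σ (f a) < σ (f b) ↔ π a < π b

/-- The pattern 123. -/
def p123 : Equiv.Perm (Fin 3) := 1
/-- The pattern 231. -/
def p231 : Equiv.Perm (Fin 3) := finRotate 3
/-- The pattern 312. -/
def p312 : Equiv.Perm (Fin 3) := (finRotate 3)⁻¹

/-- `Av_n(123,231,312)`. -/
def Av123231312 (n : ℕ) : Set (Equiv.Perm (Fin n)) :=
  {σ : Equiv.Perm (Fin n) |
    ¬ containsPattern σ p123 ∧ ¬ containsPattern σ p231 ∧ ¬ containsPattern σ p312}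

/-- The point `(σ(1), …, σ(n)) ∈ ℝ^n` (one-based values). -/
def permPoint {n : ℕ} (σ : Equiv.Perm (Fin n)) : Fin n → ℝ := fun i => ((σ i : ℕ) : ℝ) + 1

/-- The polytope `P_n(123,231,312)`. -/
def P123231312 (n : ℕ) : Set (Fin n → ℝ) :=
  convexHull ℝ (permPoint '' Av123231312 n)

/-!
The three patterns are the cyclic rotations of `123`, so avoiding them means that no three positions
carry values in increasing cyclic order; this forces each value to be the cyclic predecessor of the
one before it. With zero-based positions and values, the permutations avoiding them are therefore
the `n` reflections `i ↦ c - i` of `ℤ/n`.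

For a combination `x = ∑ w c • p c` of their points, passing from one coordinate to the next gives
`x i - x (i + 1) = ∑ w - n * w i`. Hence the weights are determined by their sum and by `x`, which
is affine independence. If `x` is an integer point of the dilate by `m`, the `n * w c` are natural
numbers with sum `n * m`; conversely such numbers give an integer point exactly when, as
multiplicities on `ℤ/n`, they describe a multiset with sum zero.

So one has to count the multisets of size `M` with prescribed sum in a finite abelian group `G`.
Adding the element `h - g` injects the multisets of size `M` and sum `g` into those of size `M + 1`
and sum `h`. This squeezes `|G|` times each count between the numbers of all multisets of size
`M - 1` and of size `M + 1`, so each count is asymptotic to `M ^ (|G| - 1) / |G|!`.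
-/

section Count

open Filter Topology

variable {G : Type*} [AddCommGroup G] [Fintype G] [DecidableEq G]

/-- Multisets of `M` elements of `G` with sum `g`, encoded by their multiplicity functions. -/
def multiplicitiesWithSum (M : ℕ) (g : G) : Finset (G → ℕ) :=
  {y ∈ Finset.piAntidiag Finset.univ M | ∑ c, y c • c = g}

@[simp]
theorem mem_multiplicitiesWithSum {M : ℕ} {g : G} {y : G → ℕ} :
    y ∈ multiplicitiesWithSum M g ↔ ∑ c, y c = M ∧ ∑ c, y c • c = g := by
  simp [multiplicitiesWithSum]

theorem card_piAntidiag_univ (ι : Type*) [Fintype ι] [DecidableEq ι] (M : ℕ) :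
    (Finset.piAntidiag (Finset.univ : Finset ι) M).card = (Fintype.card ι).multichoose M := by
  rw [← Finset.map_sym_eq_piAntidiag, Finset.card_map, Finset.sym_univ, Finset.card_univ,
    Sym.card_sym_eq_multichoose]

theorem sum_card_multiplicitiesWithSum (G : Type*) [AddCommGroup G] [Fintype G] [DecidableEq G]
    (M : ℕ) :
    ∑ g : G, (multiplicitiesWithSum M g).card = (Fintype.card G).multichoose M := by
  rw [← card_piAntidiag_univ]
  exact (Finset.card_eq_sum_card_fiberwise fun _ _ => Finset.mem_coe.2 (Finset.mem_univ _)).symm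

theorem card_multiplicitiesWithSum_le_succ (M : ℕ) (g h : G) :
    (multiplicitiesWithSum M g).card ≤ (multiplicitiesWithSum (M + 1) h).card := by
  refine Finset.card_le_card_of_injOn (· + Pi.single (h - g) 1) (fun y hy => ?_)
    (add_left_injective _).injOn
  simp only [Finset.mem_coe, mem_multiplicitiesWithSum] at hy ⊢
  simp [Finset.sum_add_distrib, add_smul, hy, Pi.single_apply, ite_smul]

theorem card_mul_card_multiplicitiesWithSum_le (M : ℕ) (g : G) :
    Fintype.card G * (multiplicitiesWithSum M g).card ≤ (Fintype.card G).multichoose (M + 1) := by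
  rw [← sum_card_multiplicitiesWithSum, ← smul_eq_mul, ← Finset.card_univ, ← Finset.sum_const]
  exact Finset.sum_le_sum fun h _ => card_multiplicitiesWithSum_le_succ M g h

theorem multichoose_le_card_mul_card_multiplicitiesWithSum (M : ℕ) (g : G) :
    (Fintype.card G).multichoose M ≤ Fintype.card G * (multiplicitiesWithSum (M + 1) g).card := by
  rw [← sum_card_multiplicitiesWithSum, ← smul_eq_mul, ← Finset.card_univ, ← Finset.sum_const]
  exact Finset.sum_le_sum fun h _ => card_multiplicitiesWithSum_le_succ M h g

theorem tendsto_multichoose_succ_div_pow (k a b : ℕ) :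
    Tendsto (fun M : ℕ => ((k + 1).multichoose (M + a) : ℝ) / (M + b : ℝ) ^ k) atTop
      (𝓝 (1 / k.factorial)) := by
  have hchoose (M : ℕ) : (k + 1).multichoose (M + a) = (M + (a + k)).choose k := by
    rw [Nat.multichoose_eq, Nat.choose_symm_of_eq_add (b := k) (by omega)]
    congr 1
    omega
  have hequiv := ((isEquivalent_choose k).comp_tendsto (tendsto_add_atTop_nat (a + k))).div
    (Asymptotics.IsEquivalent.refl (u := fun M : ℕ => (M + b : ℝ) ^ k))
  have hratio := tendsto_add_mul_div_add_mul_atTop_nhds ((a + k : ℕ) : ℝ) b 1 one_ne_zero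
  have hpow := (hratio.pow k).div_const (k.factorial : ℝ)
  simp only [hchoose]
  refine hequiv.tendsto_nhds_iff.2 ?_
  convert! hpow using 2 with M
  · simp only [Function.comp_apply, Pi.div_apply, Nat.cast_add, one_mul, add_comm]
    rw [div_pow, div_right_comm]
  · simp

theorem tendsto_card_multiplicitiesWithSum_div_pow (g : G) :
    Tendsto
      (fun M : ℕ => ((multiplicitiesWithSum M g).card : ℝ) / (M : ℝ) ^ (Fintype.card G - 1))
      atTop (𝓝 (1 / (Fintype.card G).factorial)) := by
  obtain ⟨k, hk⟩ := Nat.exists_eq_succ_of_ne_zero (Fintype.card_ne_zero (α := G))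
  have hlower (M : ℕ) := multichoose_le_card_mul_card_multiplicitiesWithSum M g
  have hupper (M : ℕ) := card_mul_card_multiplicitiesWithSum_le (M + 1) g
  have hlimit : 1 / ((k + 1).factorial : ℝ) = 1 / k.factorial / (k + 1 : ℕ) := by
    rw [Nat.factorial_succ, Nat.cast_mul, div_div, mul_comm]
  rw [hk] at hlower hupper ⊢
  rw [Nat.succ_sub_one, hlimit, ← tendsto_add_atTop_iff_nat 1]
  refine tendsto_of_tendsto_of_tendsto_of_le_of_le
    ((tendsto_multichoose_succ_div_pow k 0 1).div_const ((k + 1 : ℕ) : ℝ))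
    ((tendsto_multichoose_succ_div_pow k 2 1).div_const ((k + 1 : ℕ) : ℝ))
    (fun M => ?_) (fun M => ?_)
  · rw [div_right_comm, Nat.cast_add M 1, Nat.cast_one]
    gcongr
    rw [div_le_iff₀' (by positivity), ← Nat.cast_mul]
    exact Nat.cast_le.2 (hlower M)
  · rw [div_right_comm, Nat.cast_add M 1, Nat.cast_one]
    gcongr
    rw [le_div_iff₀' (by positivity), ← Nat.cast_mul]
    exact Nat.cast_le.2 (hupper M)

end Count

theorem pow_sub_two_div_factorial_sub_one {𝕜 : Type*} [Field 𝕜] [CharZero 𝕜] (n : ℕ) :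
    (n : 𝕜) ^ (n - 2) / (n - 1).factorial = (n : 𝕜) ^ (n - 1) / n.factorial := by
  match n with
  | 0 | 1 => simp
  | n + 2 =>
    have hn : ((n + 2 : ℕ) : 𝕜) ≠ 0 := Nat.cast_ne_zero.2 (by omega)
    rw [Nat.factorial_succ (n + 1), Nat.cast_mul, Nat.add_sub_cancel, Nat.add_succ_sub_one,
      pow_succ', mul_div_mul_left _ _ hn]

section ConvexHull

variable {𝕜 ι E : Type*} [Field 𝕜] [LinearOrder 𝕜] [IsStrictOrderedRing 𝕜] [Fintype ι]
  [AddCommGroup E] [Module 𝕜 E]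

theorem convexHull_range_eq_image_stdSimplex (p : ι → E) :
    convexHull 𝕜 (Set.range p) = Fintype.linearCombination 𝕜 p '' stdSimplex 𝕜 ι := by
  classical
  rw [← convexHull_rangle_single_eq_stdSimplex, LinearMap.image_convexHull, ← Set.range_comp]
  simp [Function.comp_def, Fintype.linearCombination_apply_single]

theorem mem_smul_convexHull_range_iff {p : ι → E} {t : 𝕜} (ht : 0 < t) {x : E} :
    x ∈ t • convexHull 𝕜 (Set.range p) ↔
      ∃ w : ι → 𝕜, (∀ i, 0 ≤ w i) ∧ ∑ i, w i = t ∧ ∑ i, w i • p i = x := by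
  have hmem : x ∈ t • convexHull 𝕜 (Set.range p) ↔
      ∃ w ∈ stdSimplex 𝕜 ι, Fintype.linearCombination 𝕜 p (t • w) = x := by
    simp [convexHull_range_eq_image_stdSimplex, Set.mem_smul_set]
  rw [hmem]
  constructor
  · rintro ⟨w, ⟨hw0, hw1⟩, hx⟩
    refine ⟨t • w, fun i => mul_nonneg ht.le (hw0 i), ?_, hx⟩
    simp [← Finset.mul_sum, hw1]
  · rintro ⟨w, hw0, hw1, hx⟩
    refine ⟨t⁻¹ • w, ⟨fun i => mul_nonneg (inv_nonneg.2 ht.le) (hw0 i), ?_⟩, ?_⟩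
    · simp [← Finset.mul_sum, hw1, ht.ne']
    · rw [smul_inv_smul₀ ht.ne', Fintype.linearCombination_apply, hx]

end ConvexHull

section Reflection

variable {n : ℕ}

theorem containsPattern_iff_strictMono {k : ℕ} (σ : Equiv.Perm (Fin n)) (π : Equiv.Perm (Fin k)) :
    containsPattern σ π ↔ ∃ f : Fin k → Fin n, StrictMono f ∧ StrictMono (σ ∘ f ∘ π.symm) := by
  refine exists_congr fun f => and_congr_right fun _ => ⟨fun h a b hab => ?_, fun h a b => ?_⟩
  · simpa [h] using hab
  · simpa using h.lt_iff_lt (a := π a) (b := π b)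

theorem containsPattern_three_iff (σ : Equiv.Perm (Fin n)) (π : Equiv.Perm (Fin 3)) :
    containsPattern σ π ↔ ∃ i j k : Fin n, i < j ∧ j < k ∧
      StrictMono (σ ∘ ![i, j, k] ∘ π.symm) := by
  rw [containsPattern_iff_strictMono]
  constructor
  · rintro ⟨f, hf, hσ⟩
    refine ⟨f 0, f 1, f 2, hf (by decide), hf (by decide), ?_⟩
    rwa [← List.ofFn_inj.1 (by simp : List.ofFn f = List.ofFn ![f 0, f 1, f 2])]
  · rintro ⟨i, j, k, hij, hjk, hσ⟩
    exact ⟨_, by simp [Fin.strictMono_iff_lt_succ, Fin.forall_fin_two, hij, hjk], hσ⟩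

theorem mem_Av123231312_iff {σ : Equiv.Perm (Fin n)} :
    σ ∈ Av123231312 n ↔ ∀ i j k : Fin n, i < j → j < k → ¬ sbtw (σ i) (σ j) (σ k) := by
  have h123 : ⇑p123.symm = ![0, 1, 2] := by decide
  have h231 : ⇑p231.symm = ![2, 0, 1] := by decide
  have h312 : ⇑p312.symm = ![1, 2, 0] := by decide
  simp only [Av123231312, Set.mem_ofPred_eq, containsPattern_three_iff, h123, h231, h312,
    Fin.strictMono_iff_lt_succ, Fin.forall_fin_two, Fin.sbtw_iff]
  simp only [Function.comp_apply, Fin.castSucc_zero, Fin.castSucc_one, Fin.succ_zero_eq_one,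
    Fin.succ_one_eq_two, Matrix.cons_val]
  grind

theorem sbtw_sub_one [NeZero n] {a b : Fin n} (hab : b ≠ a) (hb : b ≠ a - 1) :
    sbtw a b (a - 1) := by
  obtain ⟨n, rfl⟩ := Nat.exists_eq_succ_of_ne_zero (NeZero.ne n)
  have h := Fin.coe_sub_one a
  rw [Fin.sbtw_iff]
  split_ifs at h <;> simp only [Fin.lt_def, Fin.ext_iff, ne_eq, Fin.val_zero] at * <;>
    omega

theorem not_sbtw_sub_left (c : Fin n) {i j k : Fin n} (hij : i < j) (hjk : j < k) :
    ¬ sbtw (c - i) (c - j) (c - k) := by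
  rw [Fin.sbtw_iff]
  fin_omega

theorem apply_succ_of_mem_Av123231312 {σ : Equiv.Perm (Fin (n + 1))}
    (hσ : σ ∈ Av123231312 (n + 1)) (i : Fin n) : σ i.succ = σ i.castSucc - 1 := by
  by_contra hne
  obtain ⟨j, hj⟩ := σ.surjective (σ i.castSucc - 1)
  have hi : i.castSucc < i.succ := i.castSucc_lt_succ
  have hcyc : sbtw (σ i.castSucc) (σ i.succ) (σ j) :=
    hj ▸ sbtw_sub_one (σ.injective.ne hi.ne') hne
  have hcyc' : sbtw (σ j) (σ i.castSucc) (σ i.succ) := sbtw_cyclic_right hcyc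
  rw [mem_Av123231312_iff] at hσ
  rcases lt_trichotomy j i.castSucc with hji | rfl | hij
  · exact hσ _ _ _ hji hi hcyc'
  · exact sbtw_irrefl_left_right hcyc
  rcases (Fin.castSucc_lt_iff_succ_le.1 hij).lt_or_eq with hij' | rfl
  · exact hσ _ _ _ hi hij' hcyc
  · exact sbtw_irrefl_right hcyc

theorem Av123231312_eq_range_subLeft [NeZero n] :
    Av123231312 n = Set.range (Equiv.subLeft (G := Fin n)) := by
  ext σ
  constructor
  · intro hσ
    obtain ⟨n, rfl⟩ := Nat.exists_eq_succ_of_ne_zero (NeZero.ne n)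
    refine ⟨σ 0, Equiv.ext fun i => ?_⟩
    induction i using Fin.induction with
    | zero => simp
    | succ i ih =>
      have hstep := apply_succ_of_mem_Av123231312 hσ i
      rw [hstep, ← ih, ← Fin.coeSucc_eq_succ]
      simp [sub_sub]
  · rintro ⟨c, rfl⟩
    exact mem_Av123231312_iff.2 fun i j k hij hjk => not_sbtw_sub_left c hij hjk

end Reflection

section Lattice

open Filter Matrix Topology

variable {n : ℕ}

/-- The matrix over `R` whose row `c` is the point of the reflection `i ↦ c - i`, so that
`w ᵥ* reflectionMatrix n R` is the combination of these points with weights `w`. The ring varies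
because integrality is studied with weights in `ℕ` and convexity with weights in `ℝ`. -/
def reflectionMatrix (n : ℕ) (R : Type*) [NonAssocSemiring R] : Matrix (Fin n) (Fin n) R :=
  Matrix.circulant fun j => ((j : ℕ) : R) + 1

theorem natCast_vecMul_reflectionMatrix {R : Type*} [Semiring R] (y : Fin n → ℕ) (i : Fin n) :
    (((y ᵥ* reflectionMatrix n ℕ) i : ℕ) : R) =
      ((fun c => (y c : R)) ᵥ* reflectionMatrix n R) i := by
  simp [vecMul, dotProduct, reflectionMatrix]

variable [NeZero n]

theorem val_add_ite_eq_val_sub_one (d : Fin n) :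
    (d : ℕ) + (if d = 0 then n else 0) = (d - 1 : Fin n) + 1 := by
  obtain ⟨n, rfl⟩ := Nat.exists_eq_succ_of_ne_zero (NeZero.ne n)
  have h := Fin.coe_sub_one d
  split_ifs at h ⊢ with hd
  · simp [hd]
  · have := Fin.pos_iff_ne_zero.2 hd
    grind

theorem reflectionMatrix_apply_add {R : Type*} [NonAssocSemiring R] (c i : Fin n) :
    reflectionMatrix n R c i + (if c = i then (n : R) else 0) =
      reflectionMatrix n R c (i + 1) + 1 := by
  have h := congrArg (Nat.cast (R := R)) (val_add_ite_eq_val_sub_one (c - i))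
  simp only [sub_eq_zero, Nat.cast_add, Nat.cast_ite, Nat.cast_zero, Nat.cast_one] at h
  rw [reflectionMatrix, circulant_apply, circulant_apply, add_right_comm, h, sub_sub]

-- Subtraction-free so that it also applies to weights in `ℕ`.
theorem vecMul_reflectionMatrix_add {R : Type*} [CommSemiring R] (w : Fin n → R) (i : Fin n) :
    (w ᵥ* reflectionMatrix n R) i + n * w i = (w ᵥ* reflectionMatrix n R) (i + 1) + ∑ c, w c := by
  have hw : n * w i = ∑ c, w c * (if c = i then (n : R) else 0) := by simp [mul_comm]
  rw [hw]
  simp only [vecMul, dotProduct, ← Finset.sum_add_distrib, ← mul_add_one, ← mul_add,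
    reflectionMatrix_apply_add]

open Fin.CommRing in
theorem dvd_vecMul_reflectionMatrix_iff {y : Fin n → ℕ} (hy : n ∣ ∑ c, y c) (i : Fin n) :
    n ∣ (y ᵥ* reflectionMatrix n ℕ) i ↔ ∑ c, y c • c = 0 := by
  have hy' : ((∑ c, y c : ℕ) : Fin n) = 0 := Fin.natCast_eq_zero.2 hy
  have hcast : (((y ᵥ* reflectionMatrix n ℕ) i : ℕ) : Fin n) =
      ∑ c, y c • c + ((∑ c, y c : ℕ) : Fin n) * (1 - i) := by
    simp only [vecMul, dotProduct, reflectionMatrix, circulant_apply, Nat.cast_sum, Nat.cast_mul,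
      Nat.cast_add, Nat.cast_one, Nat.cast_id, Fin.cast_val_eq_self, nsmul_eq_mul, Finset.sum_mul,
      ← Finset.sum_add_distrib]
    exact Finset.sum_congr rfl fun c _ => by ring
  rw [← Fin.natCast_eq_zero, hcast, hy', zero_mul, add_zero]

theorem vecMul_reflectionMatrix_injOn {R : Type*} [CommSemiring R] [IsCancelAdd R]
    [IsCancelMulZero R] [CharZero R] (s : R) :
    Set.InjOn (· ᵥ* reflectionMatrix n R) {w : Fin n → R | ∑ c, w c = s} := by
  intro v hv w hw h
  ext i
  have hvi := vecMul_reflectionMatrix_add v i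
  rw [hv, show v ᵥ* _ = w ᵥ* _ from h, ← hw, ← vecMul_reflectionMatrix_add w i] at hvi
  exact mul_left_cancel₀ (NeZero.ne (n : R)) (add_left_cancel hvi)

theorem vecMul_reflectionMatrix_eq_sum (w : Fin n → ℝ) :
    w ᵥ* reflectionMatrix n ℝ = ∑ c, w c • permPoint (Equiv.subLeft c) :=
  vecMul_eq_sum _ _

theorem affineIndependent_permPoint_subLeft :
    AffineIndependent ℝ fun c : Fin n => permPoint (Equiv.subLeft c) := by
  rw [affineIndependent_iff_of_fintype]
  intro w hw h
  rw [Finset.weightedVSub_eq_linear_combination _ hw, ← vecMul_reflectionMatrix_eq_sum] at h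
  have hw0 : w = 0 := vecMul_reflectionMatrix_injOn (0 : ℝ) hw (by simp) (by simpa using h)
  exact congrFun hw0

theorem mem_smul_P123231312_iff {m : ℕ} (hm : 0 < m) {x : Fin n → ℝ} :
    x ∈ (m : ℝ) • P123231312 n ↔
      ∃ w : Fin n → ℝ, (∀ c, 0 ≤ w c) ∧ ∑ c, w c = m ∧ w ᵥ* reflectionMatrix n ℝ = x := by
  simp only [P123231312, Av123231312_eq_range_subLeft, ← Set.range_comp,
    vecMul_reflectionMatrix_eq_sum]
  exact mem_smul_convexHull_range_iff (by positivity)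

theorem exists_nat_weights_of_intCast_mem_smul {m : ℕ} (hm : 0 < m) {x : Fin n → ℤ}
    (hx : (fun i => (x i : ℝ)) ∈ (m : ℝ) • P123231312 n) :
    ∃ y : Fin n → ℕ, ∑ c, y c = n * m ∧
      ∀ i, (((y ᵥ* reflectionMatrix n ℕ) i : ℕ) : ℤ) = n * x i := by
  obtain ⟨w, hw0, hwm, hwx⟩ := (mem_smul_P123231312_iff hm).1 hx
  have hw (i : Fin n) : (n : ℝ) * w i = (m - x i + x (i + 1) : ℤ) := by
    have := vecMul_reflectionMatrix_add w i
    rw [hwm, hwx] at this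
    push_cast
    linarith
  have hnonneg (i : Fin n) : 0 ≤ (m - x i + x (i + 1) : ℤ) := by
    have := mul_nonneg n.cast_nonneg (hw0 i)
    rw [hw] at this
    exact_mod_cast this
  choose y hy using fun i => Int.eq_ofNat_of_zero_le (hnonneg i)
  have hyw : (fun c => (y c : ℝ)) = (n : ℝ) • w := by
    ext c
    simp [hw, hy]
  refine ⟨y, ?_, fun i => ?_⟩
  · have : (∑ c, (y c : ℝ)) = n * m := by
      simp only [congrFun hyw, Pi.smul_apply, smul_eq_mul, ← Finset.mul_sum, hwm]
    exact_mod_cast this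
  · have : (((y ᵥ* reflectionMatrix n ℕ) i : ℕ) : ℝ) = n * x i := by
      rw [natCast_vecMul_reflectionMatrix, hyw, smul_vecMul, hwx, Pi.smul_apply, smul_eq_mul]
    exact_mod_cast this

theorem intCast_mem_smul_of_nat_weights {m : ℕ} (hm : 0 < m) {x : Fin n → ℤ} {y : Fin n → ℕ}
    (hy : ∑ c, y c = n * m)
    (hyx : ∀ i, (((y ᵥ* reflectionMatrix n ℕ) i : ℕ) : ℤ) = n * x i) :
    (fun i => (x i : ℝ)) ∈ (m : ℝ) • P123231312 n := by
  have hn : (n : ℝ) ≠ 0 := NeZero.ne _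
  refine (mem_smul_P123231312_iff hm).2
    ⟨(n : ℝ)⁻¹ • fun c => (y c : ℝ), fun c => mul_nonneg (by positivity) (y c).cast_nonneg, ?_, ?_⟩
  · simp only [Pi.smul_apply, smul_eq_mul, ← Finset.mul_sum, ← Nat.cast_sum, hy, Nat.cast_mul]
    exact inv_mul_cancel_left₀ hn _
  · ext i
    have hi : (((y ᵥ* reflectionMatrix n ℕ) i : ℕ) : ℝ) = n * x i := mod_cast hyx i
    rw [smul_vecMul, Pi.smul_apply, ← natCast_vecMul_reflectionMatrix, hi, smul_eq_mul,
      inv_mul_cancel_left₀ hn]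

theorem image_natCast_mul_latticePoints {m : ℕ} (hm : 0 < m) :
    (fun (x : Fin n → ℤ) i => n * x i) ''
        {x | (fun i => (x i : ℝ)) ∈ (m : ℝ) • P123231312 n} =
      (fun (y : Fin n → ℕ) i => (((y ᵥ* reflectionMatrix n ℕ) i : ℕ) : ℤ)) ''
        (multiplicitiesWithSum (n * m) (0 : Fin n)) := by
  apply Set.Subset.antisymm
  · rintro _ ⟨x, hx, rfl⟩
    obtain ⟨y, hy, hyx⟩ := exists_nat_weights_of_intCast_mem_smul hm hx
    have hdvd : n ∣ (y ᵥ* reflectionMatrix n ℕ) 0 := Int.natCast_dvd_natCast.1 ⟨x 0, hyx 0⟩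
    have hsum := (dvd_vecMul_reflectionMatrix_iff ⟨m, hy⟩ 0).1 hdvd
    exact ⟨y, Finset.mem_coe.2 (mem_multiplicitiesWithSum.2 ⟨hy, hsum⟩), funext hyx⟩
  · rintro _ ⟨y, hy, rfl⟩
    obtain ⟨hy, hsum⟩ := mem_multiplicitiesWithSum.1 (Finset.mem_coe.1 hy)
    choose x hx using fun i => (dvd_vecMul_reflectionMatrix_iff ⟨m, hy⟩ i).2 hsum
    have hyx (i : Fin n) : (((y ᵥ* reflectionMatrix n ℕ) i : ℕ) : ℤ) = n * (x i : ℤ) :=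
      mod_cast hx i
    exact ⟨fun i => x i, intCast_mem_smul_of_nat_weights hm hy hyx, funext fun i => (hyx i).symm⟩

theorem ncard_latticePoints_eq_card_multiplicitiesWithSum {m : ℕ} (hm : 0 < m) :
    {x : Fin n → ℤ | (fun i => (x i : ℝ)) ∈ (m : ℝ) • P123231312 n}.ncard =
      (multiplicitiesWithSum (n * m) (0 : Fin n)).card := by
  have hscale : Function.Injective fun (x : Fin n → ℤ) i => n * x i := fun x x' h =>
    funext fun i => mul_left_cancel₀ (NeZero.ne (n : ℤ)) (congrFun h i)
  have hvertex : Set.InjOn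
      (fun (y : Fin n → ℕ) i => (((y ᵥ* reflectionMatrix n ℕ) i : ℕ) : ℤ))
      (multiplicitiesWithSum (n * m) (0 : Fin n)) := by
    intro y hy z hz h
    have hyz : y ᵥ* reflectionMatrix n ℕ = z ᵥ* reflectionMatrix n ℕ :=
      funext fun i => Nat.cast_injective (congrFun h i)
    exact vecMul_reflectionMatrix_injOn (n * m) (mem_multiplicitiesWithSum.1 hy).1
      (mem_multiplicitiesWithSum.1 hz).1 hyz
  rw [← Set.ncard_image_of_injective _ hscale, image_natCast_mul_latticePoints hm,
    hvertex.ncard_image, Set.ncard_coe_finset]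

theorem tendsto_ncard_latticePoints_div_pow :
    Tendsto
      (fun m : ℕ =>
        (Set.ncard {x : Fin n → ℤ | (fun i => (x i : ℝ)) ∈ (m : ℝ) • P123231312 n} : ℝ) /
          (m : ℝ) ^ (n - 1))
      atTop (𝓝 ((n : ℝ) ^ (n - 1) / n.factorial)) := by
  have hn : (n : ℝ) ≠ 0 := NeZero.ne _
  have hcount := ((tendsto_card_multiplicitiesWithSum_div_pow (0 : Fin n)).comp
    (tendsto_id.const_mul_atTop' (NeZero.pos n))).const_mul ((n : ℝ) ^ (n - 1))
  rw [Fintype.card_fin, mul_one_div] at hcount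
  refine hcount.congr' ?_
  filter_upwards [eventually_gt_atTop 0] with m hm
  rw [ncard_latticePoints_eq_card_multiplicitiesWithSum hm]
  simp only [Function.comp_apply, id, Nat.cast_mul, mul_pow]
  field_simp

end Lattice

theorem stmt9 (n : ℕ) (hn : 1 ≤ n) :
    (Av123231312 n).ncard = n ∧
    AffineIndependent ℝ (fun σ : ↥(Av123231312 n) => permPoint (σ : Equiv.Perm (Fin n))) ∧
    Filter.Tendsto
      (fun m : ℕ =>
        (Set.ncard {x : Fin n → ℤ | (fun i => (x i : ℝ)) ∈ (m : ℝ) • P123231312 n} : ℝ) /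
          (m : ℝ) ^ (n - 1))
      Filter.atTop
      (nhds ((n : ℝ) ^ (n - 2) / Nat.factorial (n - 1))) := by
  have : NeZero n := ⟨by omega⟩
  have hreflection : Function.Injective (Equiv.subLeft (G := Fin n)) := fun c d h => by
    simpa using congrFun (congrArg DFunLike.coe h) 0
  refine ⟨?_, ?_, ?_⟩
  · rw [Av123231312_eq_range_subLeft, Set.ncard_range_of_injective hreflection, Nat.card_fin]
  · rw [Av123231312_eq_range_subLeft]
    exact (affineIndependent_equiv (Equiv.ofInjective _ hreflection)).1
      affineIndependent_permPoint_subLeft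
  · rw [pow_sub_two_div_factorial_sub_one]
    exact tendsto_ncard_latticePoints_div_pow
end

section
/- For all n ≥ 1, the polytope B_n(123,312) ⊆ ℝ^{n×n} (identified with ℝ^{n²}) is unimodularly equivalent to the standard simplex of dimension binom(n,2), namely conv{e_1, …, e_{binom(n,2)+1}} where the e_i are standard basis vectors of ℝ^{n²}. In particular, |Av_n(123,312)| = binom(n,2) + 1 and the corresponding permutation matrices are affinely independent. -/
open Pointwise

/-- `Av_n(123,312)`. -/
def Av123312 (n : ℕ) : Set (Equiv.Perm (Fin n)) :=
  {σ : Equiv.Perm (Fin n) | ¬ containsPattern σ p123 ∧ ¬ containsPattern σ p312}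

/-- The permutation matrix of `σ`, viewed as a vector in `ℝ^{n×n}`. -/
def permMatrix {n : ℕ} (σ : Equiv.Perm (Fin n)) : Fin n × Fin n → ℝ :=
  fun p => if σ p.1 = p.2 then 1 else 0

/-- The polytope `B_n(123,312)`. -/
def B123312 (n : ℕ) : Set (Fin n × Fin n → ℝ) :=
  convexHull ℝ (permMatrix '' Av123312 n)

/-- Unimodular equivalence of subsets of `ℝ^ι`. -/
def UnimodEquiv {ι : Type} [Fintype ι] [DecidableEq ι] (P Q : Set (ι → ℝ)) : Prop :=
  ∃ (A : Matrix ι ι ℤ) (b : ι → ℤ), (A.det = 1 ∨ A.det = -1) ∧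
    Set.BijOn (fun x => (A.map (fun z : ℤ => (z : ℝ))).mulVec x + fun i => ((b i : ℝ))) P Q

/-!
An avoider `σ` is decreasing except for the pairs `i ≤ a < j ≤ b`, where `(a, b]` is the interval of
positions with values above `σ 0`; hence avoiders correspond to the nonempty intervals `(a, b]`,
together with `(n - 1, n - 1]` for the decreasing permutation.

Order the cells of the `n × n` grid by antidiagonal, then by column. The least cell occupied by the
avoider of `(a, b]` is `(a, n - 1 - b)`, so different avoiders have different least cells. Adding
the unit vectors at the remaining cells to the permutation matrices therefore gives a unitriangular
integer matrix, whose inverse carries the vertices to distinct standard basis vectors.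
-/

open Function

section UnimodularMatrix

variable {ι κ : Type*} [Fintype ι] [DecidableEq ι]

/-- `Function.extend` completes the family `v` by unit vectors to a square matrix, which is
unitriangular for the order pulled back along `r`. -/
lemma det_extend_single_eq_one {R α : Type*} [CommRing R] [LinearOrder α] {r : ι → α}
    (hr : Injective r) {lead : κ → ι} (hlead : Injective lead) {v : κ → ι → R}
    (hone : ∀ k, v k (lead k) = 1) (hlt : ∀ k i, v k i ≠ 0 → i ≠ lead k → r (lead k) < r i) :
    (Matrix.of (extend lead v fun i => Pi.single i 1)).det = 1 := by
  let _ : LinearOrder ι := LinearOrder.lift' r hr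
  have htri : (Matrix.of (extend lead v fun i => Pi.single i 1)).IsUpperTriangular := by
    intro i j hji
    replace hji : r j < r i := hji
    by_cases hi : ∃ k, lead k = i
    · obtain ⟨k, rfl⟩ := hi
      rw [Matrix.of_apply, hlead.extend_apply]
      by_contra hne
      exact hji.not_gt (hlt k j hne fun h => hji.ne (congrArg r h))
    · rw [Matrix.of_apply, extend_apply' _ _ _ hi]
      exact Pi.single_eq_of_ne (fun h => hji.ne (congrArg r h)) 1
  rw [Matrix.det_of_isUpperTriangular htri]
  refine Finset.prod_eq_one fun i _ => ?_
  by_cases hi : ∃ k, lead k = i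
  · obtain ⟨k, rfl⟩ := hi
    rw [Matrix.of_apply, hlead.extend_apply, hone]
  · rw [Matrix.of_apply, extend_apply' _ _ _ hi, Pi.single_eq_same]

lemma exists_isUnit_det_row_eq {R α : Type*} [CommRing R] [LinearOrder α] [Finite κ] {r : ι → α}
    (hr : Injective r) {lead e : κ → ι} (hlead : Injective lead) (he : Injective e)
    {v : κ → ι → R} (hone : ∀ k, v k (lead k) = 1)
    (hlt : ∀ k i, v k i ≠ 0 → i ≠ lead k → r (lead k) < r i) :
    ∃ N : Matrix ι ι R, IsUnit N.det ∧ ∀ k, N.row (e k) = v k := by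
  obtain ⟨τ, hτ⟩ := Equiv.Perm.exists_extending_pair e lead he hlead
  refine ⟨(Matrix.of (extend lead v fun i => Pi.single i 1)).submatrix τ id, ?_, fun k => ?_⟩
  · rw [Matrix.det_permute, det_extend_single_eq_one hr hlead hone hlt, mul_one]
    exact (Equiv.Perm.sign τ).isUnit.map (Int.castRingHom R)
  · ext i
    simp [hτ, hlead.extend_apply]

lemma isUnit_map_intCast {N : Matrix ι ι ℤ} (hN : IsUnit N.det) :
    IsUnit (N.map (Int.cast : ℤ → ℝ)) :=
  ((Matrix.isUnit_iff_isUnit_det N).2 hN).map (Int.castRingHom ℝ).mapMatrix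

lemma affineIndependent_of_row_eq {N : Matrix ι ι ℤ} (hN : IsUnit N.det) {w : κ → ι → ℝ} {e : κ → ι}
    (hw : ∀ k, w k = (N.map (Int.cast : ℤ → ℝ)).row (e k)) (he : Injective e) :
    AffineIndependent ℝ w := by
  rw [funext hw]
  exact ((Matrix.linearIndependent_rows_of_isUnit (isUnit_map_intCast hN)).comp e
    he).affineIndependent

end UnimodularMatrix

section UnimodEquiv

variable {ι : Type} {κ : Type*} [Fintype ι] [DecidableEq ι]

lemma unimodEquiv_convexHull_range {A : Matrix ι ι ℤ} (hA : IsUnit A.det) (w : κ → ι → ℝ) :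
    UnimodEquiv (convexHull ℝ (Set.range w))
      (convexHull ℝ (Set.range fun k => (A.map (Int.cast : ℤ → ℝ)).mulVec (w k))) := by
  refine ⟨A, 0, Int.isUnit_iff.1 hA, ?_⟩
  have hlin : (fun x => (A.map (fun z : ℤ => (z : ℝ))).mulVec x +
      fun i => (((0 : ι → ℤ) i : ℤ) : ℝ)) = (A.map (Int.cast : ℤ → ℝ)).mulVecLin := by
    ext x i
    simp
  have himage : convexHull ℝ (Set.range fun k => (A.map (Int.cast : ℤ → ℝ)).mulVec (w k)) =
      (A.map (Int.cast : ℤ → ℝ)).mulVecLin '' convexHull ℝ (Set.range w) := by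
    rw [LinearMap.image_convexHull, ← Set.range_comp]
    rfl
  rw [hlin, himage]
  exact (Matrix.mulVec_injective_of_isUnit (isUnit_map_intCast hA)).injOn.bijOn_image

lemma unimodEquiv_convexHull_range_single {N : Matrix ι ι ℤ} (hN : IsUnit N.det) {w : κ → ι → ℝ}
    {e : κ → ι} (hw : ∀ k, w k = (N.map (Int.cast : ℤ → ℝ)).row (e k)) :
    UnimodEquiv (convexHull ℝ (Set.range w))
      (convexHull ℝ (Set.range fun k => (Pi.single (e k) 1 : ι → ℝ))) := by
  have hNt : IsUnit N.transpose.det := by rwa [Matrix.det_transpose]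
  have hsingle : ∀ k, (N.transpose⁻¹.map (Int.cast : ℤ → ℝ)).mulVec (w k) =
      Pi.single (e k) 1 := by
    intro k
    have hrow : w k = (N.transpose.map (Int.cast : ℤ → ℝ)).mulVec (Pi.single (e k) 1) := by
      rw [hw, Matrix.mulVec_single_one]
      rfl
    have hinv : N.transpose⁻¹.map (Int.cast : ℤ → ℝ) * N.transpose.map Int.cast = 1 := by
      have := congrArg (Int.castRingHom ℝ).mapMatrix (Matrix.nonsing_inv_mul _ hNt)
      rwa [map_mul, map_one] at this
    rw [hrow, Matrix.mulVec_mulVec, hinv, Matrix.one_mulVec]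
  simpa only [hsingle] using
    unimodEquiv_convexHull_range (Matrix.isUnit_nonsing_inv_det _ hNt) w

end UnimodEquiv

section Pattern

variable {n : ℕ} {σ : Equiv.Perm (Fin n)}

lemma containsPattern_p123_iff :
    containsPattern σ p123 ↔ ∃ i j k, i < j ∧ j < k ∧ σ i < σ j ∧ σ j < σ k := by
  constructor
  · rintro ⟨f, hf, h⟩
    exact ⟨f 0, f 1, f 2, hf (by decide), hf (by decide), (h 0 1).2 (by decide),
      (h 1 2).2 (by decide)⟩
  · rintro ⟨i, j, k, hij, hjk, hσij, hσjk⟩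
    have hcomp : σ ∘ ![i, j, k] = ![σ i, σ j, σ k] := by
      ext a
      fin_cases a <;> rfl
    have hmono : StrictMono (σ ∘ ![i, j, k]) := by simp [hcomp, hσij, hσjk]
    exact ⟨![i, j, k], by simp [hij, hjk], fun _ _ => hmono.lt_iff_lt⟩

lemma containsPattern_p312_iff :
    containsPattern σ p312 ↔ ∃ i j k, i < j ∧ j < k ∧ σ j < σ k ∧ σ k < σ i := by
  constructor
  · rintro ⟨f, hf, h⟩
    exact ⟨f 0, f 1, f 2, hf (by decide), hf (by decide), (h 1 2).2 (by decide),
      (h 2 0).2 (by decide)⟩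
  · rintro ⟨i, j, k, hij, hjk, hσjk, hσki⟩
    have h0 : p312 0 = 2 := by decide
    have h1 : p312 1 = 0 := by decide
    have h2 : p312 2 = 1 := by decide
    refine ⟨![i, j, k], by simp [hij, hjk], fun a b => ?_⟩
    fin_cases a <;> fin_cases b <;> simp [h0, h1, h2, hσki, hσki.le, hσjk, hσjk.le,
      hσjk.trans hσki, (hσjk.trans hσki).le]

lemma mem_Av123312_iff : σ ∈ Av123312 n ↔
    (∀ i j k, i < j → j < k → σ i < σ j → ¬ σ j < σ k) ∧
    (∀ i j k, i < j → j < k → σ j < σ k → ¬ σ k < σ i) := by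
  simp only [Av123312, Set.mem_ofPred_eq, containsPattern_p123_iff, containsPattern_p312_iff]
  push Not
  rfl

variable [NeZero n]

lemma ordConnected_setOf_apply_zero_lt (hσ : σ ∈ Av123312 n) :
    {i | σ 0 < σ i}.OrdConnected := by
  obtain ⟨h123, h312⟩ := mem_Av123312_iff.1 hσ
  refine Set.ordConnected_of_Ioo fun i hi k hk _ j hj => ?_
  have hi0 : 0 < i := Fin.pos_iff_ne_zero.2 fun h => lt_irrefl (σ 0) (h ▸ hi)
  have hki : σ k < σ i := lt_of_le_of_ne (not_lt.1 (h123 0 i k hi0 (hj.1.trans hj.2) hi))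
    fun h => (hj.1.trans hj.2).ne' (σ.injective h)
  exact hk.trans (lt_of_not_ge fun h => h312 i j k hj.1 hj.2
    (lt_of_le_of_ne h fun h => hj.2.ne (σ.injective h)) hki)

lemma apply_lt_apply_iff_of_mem_Av123312 (hσ : σ ∈ Av123312 n) {i j : Fin n} (hij : i < j) :
    σ i < σ j ↔ σ i ≤ σ 0 ∧ σ 0 < σ j := by
  obtain ⟨h123, h312⟩ := mem_Av123312_iff.1 hσ
  refine ⟨fun h => ?_, fun h => h.1.trans_lt h.2⟩
  rcases eq_or_ne i 0 with rfl | hi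
  · exact ⟨le_rfl, h⟩
  have hi0 : 0 < i := Fin.pos_iff_ne_zero.2 hi
  have hj : σ 0 ≠ σ j := σ.injective.ne (hi0.trans hij).ne
  exact ⟨not_lt.1 fun h0 => h123 0 i j hi0 hij h0 h,
    lt_of_le_of_ne (not_lt.1 (h312 0 i j hi0 hij h)) hj⟩

end Pattern

lemma equiv_eq_of_forall_lt_iff_lt {α β : Type*} [LinearOrder α] [LinearOrder β] [WellFoundedLT β]
    {σ τ : α ≃ β} (h : ∀ i j, i < j → (σ i < σ j ↔ τ i < τ j)) : σ = τ := by
  have hmono : StrictMono (σ.symm.trans τ) := by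
    refine σ.surjective.forall₂.2 fun i j hσ => ?_
    simp only [Equiv.trans_apply, Equiv.symm_apply_apply]
    have hne : i ≠ j := ne_of_apply_ne σ hσ.ne
    rcases hne.lt_or_gt with hij | hji
    · exact (h i j hij).1 hσ
    · exact lt_of_le_of_ne (not_lt.1 fun hτ => hσ.not_gt ((h j i hji).2 hτ)) (τ.injective.ne hne)
  have hrefl := Subsingleton.elim
    (hmono.orderIsoOfSurjective _ (σ.symm.trans τ).surjective) (OrderIso.refl β)
  ext i
  simpa using (DFunLike.congr_fun hrefl (σ i)).symm

section Avoider

variable {n : ℕ}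

/-- The permutation rotating the initial segment `[0, p.2]` so that `p.1` becomes its last
element. -/
def prefixRotation (p : Fin n × Fin n) (hp : p.1 ≤ p.2) : Equiv.Perm (Fin n) where
  toFun i := ⟨if i ≤ p.1 then i + (p.2 - p.1) else if i ≤ p.2 then i - (p.1 + 1) else i, by
    split_ifs <;> omega⟩
  invFun j := ⟨if (j : ℕ) < p.2 - p.1 then j + (p.1 + 1)
    else if j ≤ p.2 then j - (p.2 - p.1) else j, by split_ifs <;> omega⟩
  left_inv i := by
    ext
    simp only [Fin.le_def]
    split_ifs <;> omega
  right_inv j := by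
    ext
    simp only [Fin.le_def]
    split_ifs <;> omega

variable [NeZero n]

variable (n) in
/-- The pairs `(a, b)` indexing the intervals `(a, b]` of positions where an avoider exceeds its
first value; `(⊤, ⊤)` is the chosen representative of the empty interval. -/
def ascentBlocks : Finset (Fin n × Fin n) :=
  insert (⊤, ⊤) ({p | p.1 < p.2} : Finset (Fin n × Fin n))

lemma card_ascentBlocks : (ascentBlocks n).card = n.choose 2 + 1 := by
  rw [ascentBlocks, Finset.card_insert_of_notMem (by simp), Fintype.card_product_filter_lt,
    Fintype.card_fin]

lemma mem_ascentBlocks {p : Fin n × Fin n} :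
    p ∈ ascentBlocks n ↔ p = (⊤, ⊤) ∨ p.1 < p.2 := by
  simp [ascentBlocks]

lemma fst_le_snd_of_mem_ascentBlocks {p : Fin n × Fin n} (hp : p ∈ ascentBlocks n) :
    p.1 ≤ p.2 := by
  rcases mem_ascentBlocks.1 hp with rfl | hlt
  · exact le_rfl
  · exact hlt.le

lemma exists_ascentBlock_eq_Ioc {s : Set (Fin n)} (hs : s.OrdConnected) (h0 : 0 ∉ s) :
    ∃ p ∈ ascentBlocks n, s = Set.Ioc p.1 p.2 := by
  rcases s.eq_empty_or_nonempty with rfl | hne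
  · exact ⟨(⊤, ⊤), mem_ascentBlocks.2 (Or.inl rfl), (Set.Ioc_self _).symm⟩
  obtain ⟨m, hm, hmin⟩ := s.exists_min_image id s.toFinite hne
  obtain ⟨M, hM, hmax⟩ := s.exists_max_image id s.toFinite hne
  have hm0 : ¬ IsMin m := fun h => h0 ((show m = 0 from isMin_iff_eq_bot.1 h) ▸ hm)
  have hlt : Order.pred m < M := (Order.pred_lt_of_not_isMin hm0).trans_le (hmin M hM)
  refine ⟨(Order.pred m, M), mem_ascentBlocks.2 (Or.inr hlt), ?_⟩
  rw [Set.Ioc_pred_left_eq_Icc_of_not_isMin hm0]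
  exact Set.Subset.antisymm (fun i hi => ⟨hmin i hi, hmax i hi⟩) (hs.out hm hM)

/-- The decreasing permutation composed with a prefix rotation: its one-line notation is decreasing
on `[0, p.1]` and on the rest, and it ascends at `p.1` when `p.1 < p.2`. -/
def avoider (p : ascentBlocks n) : Equiv.Perm (Fin n) :=
  (prefixRotation p.1 (fst_le_snd_of_mem_ascentBlocks p.2)).trans Fin.revPerm

lemma val_avoider_apply (p : ascentBlocks n) (i : Fin n) : (avoider p i : ℕ) =
    n - ((if i ≤ p.1.1 then (i : ℕ) + (p.1.2 - p.1.1) else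
      if i ≤ p.1.2 then (i : ℕ) - (p.1.1 + 1) else i) + 1) :=
  Fin.val_rev _

lemma avoider_apply_fst (p : ascentBlocks n) : avoider p p.1.1 = p.1.2.rev := by
  have hle := fst_le_snd_of_mem_ascentBlocks p.2
  ext
  rw [val_avoider_apply, if_pos le_rfl, Fin.val_rev, Nat.add_sub_cancel' hle]

lemma avoider_lt_avoider_iff (p : ascentBlocks n) {i j : Fin n} (hij : i < j) :
    avoider p i < avoider p j ↔ i ≤ p.1.1 ∧ j ∈ Set.Ioc p.1.1 p.1.2 := by
  have hle := fst_le_snd_of_mem_ascentBlocks p.2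
  rw [Fin.lt_def, val_avoider_apply, val_avoider_apply, Set.mem_Ioc]
  split_ifs <;> omega

lemma avoider_mem_Av123312 (p : ascentBlocks n) : avoider p ∈ Av123312 n := by
  rw [mem_Av123312_iff]
  constructor
  · intro i j k hij hjk hσij hσjk
    rw [avoider_lt_avoider_iff p hij] at hσij
    rw [avoider_lt_avoider_iff p hjk] at hσjk
    exact hσij.2.1.not_ge hσjk.1
  · intro i j k hij hjk hσjk
    rw [avoider_lt_avoider_iff p hjk] at hσjk
    exact ((avoider_lt_avoider_iff p (hij.trans hjk)).2
      ⟨hij.le.trans hσjk.1, hσjk.2⟩).not_gt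

lemma exists_avoider_eq {σ : Equiv.Perm (Fin n)} (hσ : σ ∈ Av123312 n) :
    ∃ p, avoider p = σ := by
  obtain ⟨p, hp, hIoc⟩ := exists_ascentBlock_eq_Ioc (ordConnected_setOf_apply_zero_lt hσ)
    (lt_irrefl (σ 0))
  have hmem : ∀ i, σ 0 < σ i ↔ i ∈ Set.Ioc p.1 p.2 := Set.ext_iff.1 hIoc
  refine ⟨⟨p, hp⟩, equiv_eq_of_forall_lt_iff_lt fun i j hij => ?_⟩
  rw [avoider_lt_avoider_iff _ hij, apply_lt_apply_iff_of_mem_Av123312 hσ hij,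
    ← not_lt (a := σ 0), hmem, hmem]
  refine and_congr_left fun hj => ⟨fun hi h => hi.not_gt h.1, fun h => not_lt.1 fun hi => ?_⟩
  exact h ⟨hi, hij.le.trans hj.2⟩

end Avoider

section LeadingCell

variable {n : ℕ}

/-- Sort key ordering the cells of the grid by antidiagonal, then by column. -/
def antidiagonalKey (c : Fin n × Fin n) : ℕ ×ₗ ℕ :=
  toLex (c.1 + c.2, c.2)

lemma antidiagonalKey_injective : Injective (antidiagonalKey (n := n)) := by
  intro c d h
  simp only [antidiagonalKey, toLex_inj, Prod.mk.injEq] at h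
  ext <;> omega

variable [NeZero n]

lemma antidiagonalKey_lt_of_ne (p : ascentBlocks n) {i : Fin n} (hi : i ≠ p.1.1) :
    antidiagonalKey (p.1.1, p.1.2.rev) < antidiagonalKey (i, avoider p i) := by
  have hval := val_avoider_apply p i
  have hcases : p.1.1 < p.1.2 ∨ p.1.1 = p.1.2 ∧ i < p.1.1 := by
    refine (mem_ascentBlocks.1 p.2).symm.imp_right fun hp => ?_
    rw [hp] at hi ⊢
    exact ⟨rfl, hi.lt_top⟩
  simp only [antidiagonalKey, Prod.Lex.toLex_lt_toLex, Fin.val_rev]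
  split_ifs at hval <;> omega

lemma avoider_injective : Injective (avoider (n := n)) := by
  intro p q h
  have hfst : p.1.1 = q.1.1 := by
    by_contra hne
    have hpq := antidiagonalKey_lt_of_ne p (Ne.symm hne)
    have hqp := antidiagonalKey_lt_of_ne q hne
    rw [h, avoider_apply_fst] at hpq
    rw [← h, avoider_apply_fst] at hqp
    exact hpq.not_gt hqp
  have hsnd : p.1.2.rev = q.1.2.rev := by
    rw [← avoider_apply_fst, ← avoider_apply_fst, h, hfst]
  exact Subtype.ext (Prod.ext hfst (Fin.rev_injective hsnd))

variable (n) in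
/-- The parametrisation of the avoiders by their ascent blocks. -/
noncomputable def avoiderEquiv : ascentBlocks n ≃ Av123312 n :=
  Equiv.ofBijective (fun p => ⟨avoider p, avoider_mem_Av123312 p⟩)
    ⟨fun _ _ h => avoider_injective (congrArg Subtype.val h), fun σ =>
      (exists_avoider_eq σ.2).imp fun _ => Subtype.ext⟩

lemma card_Av123312 : Nat.card (Av123312 n) = n.choose 2 + 1 := by
  rw [← Nat.card_congr (avoiderEquiv n), Nat.card_eq_fintype_card, Fintype.card_coe,
    card_ascentBlocks]

lemma choose_two_add_one_le : n.choose 2 + 1 ≤ n * n := by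
  simpa [card_ascentBlocks] using (ascentBlocks n).card_le_univ

lemma exists_isUnit_det_permMatrix_eq_row {e : Av123312 n → Fin n × Fin n} (he : Injective e) :
    ∃ N : Matrix (Fin n × Fin n) (Fin n × Fin n) ℤ, IsUnit N.det ∧
      ∀ σ : Av123312 n, permMatrix σ.1 = (N.map (Int.cast : ℤ → ℝ)).row (e σ) := by
  let lead : ascentBlocks n → Fin n × Fin n := fun p => (p.1.1, p.1.2.rev)
  have hlead : Injective lead := fun p q h =>
    have h := Prod.ext_iff.1 h
    Subtype.ext (Prod.ext h.1 (Fin.rev_injective h.2))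
  obtain ⟨N, hN, hrow⟩ := exists_isUnit_det_row_eq antidiagonalKey_injective hlead
    (he.comp (avoiderEquiv n).injective)
    (v := fun p c => if avoider p c.1 = c.2 then (1 : ℤ) else 0)
    (fun p => if_pos (avoider_apply_fst p)) (by
      rintro p ⟨i, j⟩ hne hij
      obtain rfl : avoider p i = j := by simpa using hne
      refine antidiagonalKey_lt_of_ne p fun hi => hij ?_
      rw [hi, avoider_apply_fst])
  refine ⟨N, hN, (avoiderEquiv n).surjective.forall.2 fun p => ?_⟩
  ext c
  have hentry : N (e (avoiderEquiv n p)) c = if avoider p c.1 = c.2 then 1 else 0 :=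
    congrFun (hrow p) c
  rw [Matrix.row_apply, Matrix.map_apply, hentry, Int.cast_ite, Int.cast_one, Int.cast_zero]
  rfl

end LeadingCell

lemma single_finProdFinEquiv_symm_castLE {k l m : ℕ} (h : m ≤ k * l) (j : Fin m) :
    (fun p : Fin k × Fin l => if (finProdFinEquiv p : ℕ) = (j : ℕ) then (1 : ℝ) else 0) =
      Pi.single (finProdFinEquiv.symm (j.castLE h)) 1 := by
  ext p
  simp only [Pi.single_apply, Equiv.eq_symm_apply, Fin.ext_iff, Fin.val_castLE]

theorem stmt11 (n : ℕ) (hn : 1 ≤ n) :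
    UnimodEquiv (B123312 n)
      (convexHull ℝ (Set.range fun j : Fin (n.choose 2 + 1) =>
        fun p : Fin n × Fin n => if (finProdFinEquiv p : ℕ) = (j : ℕ) then (1 : ℝ) else 0)) ∧
    (Av123312 n).ncard = n.choose 2 + 1 ∧
    AffineIndependent ℝ (fun σ : ↥(Av123312 n) => permMatrix (σ : Equiv.Perm (Fin n))) := by
  have : NeZero n := ⟨by omega⟩
  have hcard : (Av123312 n).ncard = n.choose 2 + 1 := card_Av123312
  let cell : Fin (n.choose 2 + 1) → Fin n × Fin n := fun j =>
    finProdFinEquiv.symm (j.castLE choose_two_add_one_le)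
  have hcell : Injective cell :=
    finProdFinEquiv.symm.injective.comp (Fin.castLE_injective choose_two_add_one_le)
  let e : Av123312 n ≃ Fin (n.choose 2 + 1) := Finite.equivFinOfCardEq hcard
  obtain ⟨N, hN, hrow⟩ := exists_isUnit_det_permMatrix_eq_row (hcell.comp e.injective)
  refine ⟨?_, hcard, affineIndependent_of_row_eq hN hrow (hcell.comp e.injective)⟩
  rw [funext (single_finProdFinEquiv_symm_castLE choose_two_add_one_le), B123312,
    Set.image_eq_range, ← e.surjective.range_comp]
  exact unimodEquiv_convexHull_range_single hN hrow
end

section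
/- Let Q be a finite poset with |Q| = n ≥ 1 and let ω : Q → {1, …, n} be a natural labeling, i.e. an order-preserving bijection. For each linear extension of Q, i.e. a bijection e : Q → {1, …, n} with e(q) < e(q′) whenever q < q′ in Q, let w_e = ω ∘ e^{-1} ∈ S_n and des(w_e) = #{1 ≤ i ≤ n−1 : w_e(i) > w_e(i+1)}. Let l be the maximum length of a chain in Q (a chain with m elements has length m−1). Then Q is graded (every maximal chain of Q has length l) if and only if for every integer j, #{linear extensions e of Q : des(w_e) = j} = #{linear extensions e of Q : des(w_e) = n − l − 1 − j}; i.e. the Eulerian polynomial A_Q(t) = Σ_e t^{1+des(w_e)} is palindromic. -/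
/-- Extend `w : Fin n → Fin n` to `ℕ → ℕ` (by `0` outside the range). -/
def toNatFun {n : ℕ} (w : Fin n → Fin n) : ℕ → ℕ :=
  fun i => if h : i < n then (w ⟨i, h⟩ : ℕ) else 0

/-- The number of descents of `w`: `#{1 ≤ i ≤ n-1 : w(i) > w(i+1)}` (zero-based:
positions `i ∈ {0,…,n-2}` with `w(i) > w(i+1)`). -/
def desCount {n : ℕ} (w : Fin n → Fin n) : ℕ :=
  ((Finset.range (n - 1)).filter fun i => toNatFun w (i + 1) < toNatFun w i).card

/-!
Let `w_e = ω ∘ e⁻¹`. Sorting a labeled `P`-partition expresses the number of monotone (resp.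
strictly monotone) maps `Q → {1, …, M}` as `∑_e C(M + n - 1 - des w_e, n)` (resp.
`∑_e C(M + des w_e, n)`), the strict case coming from the reversed labeling. These binomials form a
unitriangular system, so palindromicity of the descent distribution says exactly that `Q` has as
many monotone maps to `{1, …, M}` as strictly monotone maps to `{1, …, M + l}`, for every `M`.
Adding the rank `r` (the height) is an injection from the former to the latter. It is onto when `Q`
is graded, as `g - r` is then still monotone and less than `M`; otherwise, for `M ≥ 2`, a cover
`x ⋖ y` with `r y > r x + 1`, or a maximal `y` with `r y < l`, leaves room for a strictly monotone
map that is not of the form `f + r`.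
-/

open Function Finset

section DescentCounts

variable {ι : Type*} {s : Finset ι} {k K : ℕ} {d d' : ι → ℕ}

lemma eq_of_sum_mul_unitriangular {R : Type*} [Semiring R] [IsLeftCancelAdd R] {c : ℕ → ℕ → R}
    (hdiag : ∀ i, c i i = 1) (hupper : ∀ i j, i < j → c i j = 0) {a b : ℕ → R}
    (h : ∀ i < K, ∑ j ∈ range K, a j * c i j = ∑ j ∈ range K, b j * c i j) :
    ∀ i < K, a i = b i := by
  intro i
  induction i using Nat.strong_induction_on with
  | _ i ih =>
    intro hi
    have sum_eq (u : ℕ → R) :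
        ∑ j ∈ range K, u j * c i j = ∑ j ∈ range i, u j * c i j + u i := by
      rw [← sum_subset (range_subset_range.2 hi), sum_range_succ, hdiag, mul_one]
      intro j _ hj
      rw [hupper i j (by simpa [Nat.succ_le_iff] using hj), mul_zero]
    have hbelow : ∑ j ∈ range i, a j * c i j = ∑ j ∈ range i, b j * c i j :=
      sum_congr rfl fun j hj ↦ by
        rw [ih j (mem_range.1 hj) ((mem_range.1 hj).trans hi)]
    have hi_eq := h i hi
    rw [sum_eq a, sum_eq b, hbelow] at hi_eq
    exact add_left_cancel hi_eq

lemma sum_comp_eq_sum_range_card_mul (hd : ∀ i ∈ s, d i < K) (F : ℕ → ℕ) :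
    ∑ i ∈ s, F (d i) = ∑ j ∈ range K, #{i ∈ s | d i = j} * F j := by
  rw [← sum_fiberwise_of_maps_to (t := range K) (fun i hi ↦ mem_range.2 (hd i hi))]
  refine sum_congr rfl fun j _ ↦ ?_
  rw [sum_congr rfl fun i hi ↦ congrArg F (mem_filter.1 hi).2, sum_const, smul_eq_mul]

theorem sum_choose_eq_iff_card_fiber_eq (hd : ∀ i ∈ s, d i ≤ k) (hd' : ∀ i ∈ s, d' i ≤ k) :
    (∀ M, ∑ i ∈ s, (M + k - d i).choose (k + 1) = ∑ i ∈ s, (M + k - d' i).choose (k + 1)) ↔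
      ∀ j, #{i ∈ s | d i = j} = #{i ∈ s | d' i = j} := by
  have hsum (M : ℕ) := sum_comp_eq_sum_range_card_mul (fun i hi ↦ Nat.lt_succ_of_le (hd i hi))
    fun j ↦ (M + k - j).choose (k + 1)
  have hsum' (M : ℕ) := sum_comp_eq_sum_range_card_mul (fun i hi ↦ Nat.lt_succ_of_le (hd' i hi))
    fun j ↦ (M + k - j).choose (k + 1)
  simp only [hsum, hsum']
  refine ⟨fun h j ↦ ?_, fun h M ↦ by simp only [h]⟩
  rcases lt_or_ge j (k + 1) with hj | hj
  · refine eq_of_sum_mul_unitriangular (c := fun i j ↦ (i + 1 + k - j).choose (k + 1))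
      (fun i ↦ ?_) (fun i j hij ↦ Nat.choose_eq_zero_of_lt (by omega))
      (fun i _ ↦ h (i + 1)) j hj
    rw [show i + 1 + k - i = k + 1 by omega, Nat.choose_self]
  · rw [filter_false_of_mem fun i hi ↦ ((hd i hi).trans_lt hj).ne,
      filter_false_of_mem fun i hi ↦ ((hd' i hi).trans_lt hj).ne]

end DescentCounts

section Words

variable {k : ℕ}

/-- The number of ascents of the word `w` among the zero-based positions `j < i`; only the range
`i ≤ n - 1` is meaningful, since `toNatFun` pads `w` with zeros. -/
def ascentsBefore {n : ℕ} (w : Fin n → Fin n) (i : ℕ) : ℕ :=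
  #{j ∈ range i | toNatFun w j < toNatFun w (j + 1)}

lemma ascentsBefore_succ {n : ℕ} (w : Fin n → Fin n) (i : ℕ) :
    ascentsBefore w (i + 1) =
      ascentsBefore w i + if toNatFun w i < toNatFun w (i + 1) then 1 else 0 := by
  unfold ascentsBefore
  rw [range_add_one, filter_insert]
  split_ifs <;> simp

lemma ascentsBefore_mono {n : ℕ} (w : Fin n → Fin n) : Monotone (ascentsBefore w) :=
  fun _ _ h ↦ card_le_card (filter_subset_filter _ (range_subset_range.2 h))

lemma toNatFun_castSucc (w : Fin (k + 1) → Fin (k + 1)) (i : Fin k) :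
    toNatFun w i = w i.castSucc :=
  dif_pos i.castSucc.isLt

lemma toNatFun_succ (w : Fin (k + 1) → Fin (k + 1)) (i : Fin k) :
    toNatFun w (i + 1) = w i.succ :=
  dif_pos i.succ.isLt

lemma toNatFun_ne_toNatFun_succ {w : Fin (k + 1) → Fin (k + 1)} (hw : Injective w) (i : Fin k) :
    toNatFun w i ≠ toNatFun w (i + 1) := by
  rw [toNatFun_castSucc, toNatFun_succ, Ne, Fin.val_inj]
  exact hw.ne i.castSucc_lt_succ.ne

lemma desCount_add_ascentsBefore {w : Fin (k + 1) → Fin (k + 1)} (hw : Injective w) :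
    desCount w + ascentsBefore w k = k := by
  have hasc : ascentsBefore w k = #{j ∈ range k | ¬ toNatFun w (j + 1) < toNatFun w j} := by
    refine congrArg card (filter_congr fun j hj ↦ ?_)
    have hne := toNatFun_ne_toNatFun_succ hw ⟨j, mem_range.1 hj⟩
    exact ⟨fun h ↦ h.not_gt, fun h ↦ (not_lt.1 h).lt_of_ne hne⟩
  rw [hasc, desCount, Nat.add_sub_cancel, card_filter_add_card_filter_not, card_range]

lemma ascentsBefore_rev_comp (w : Fin (k + 1) → Fin (k + 1)) :
    ascentsBefore (Fin.rev ∘ w) k = desCount w := by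
  refine congrArg card (filter_congr fun j hj ↦ ?_)
  let i : Fin k := ⟨j, mem_range.1 hj⟩
  change toNatFun _ i < toNatFun _ (i + 1) ↔ toNatFun w (i + 1) < toNatFun w i
  simp only [toNatFun_castSucc, toNatFun_succ, comp_apply, Fin.val_fin_lt, Fin.rev_lt_rev]

lemma strictMono_toLex_iff_strictMono_add_ascentsBefore {w : Fin (k + 1) → Fin (k + 1)}
    (hw : Injective w) (a : Fin (k + 1) → ℕ) :
    StrictMono (fun i ↦ toLex (a i, w i)) ↔ StrictMono fun i ↦ a i + ascentsBefore w i := by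
  simp only [Fin.strictMono_iff_lt_succ, Prod.Lex.toLex_lt_toLex]
  refine forall_congr' fun i ↦ ?_
  have := toNatFun_ne_toNatFun_succ hw i
  have hsucc := ascentsBefore_succ w i
  rw [Fin.lt_def, ← toNatFun_castSucc, ← toNatFun_succ]
  simp only [Fin.val_castSucc, Fin.val_succ]
  split_ifs at hsucc <;> omega

lemma ascentsBefore_le_of_strictMono (w : Fin (k + 1) → Fin (k + 1)) {b : Fin (k + 1) → ℕ}
    (hb : StrictMono b) (i : Fin (k + 1)) : ascentsBefore w i ≤ b i := by
  induction i using Fin.induction with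
  | zero => simp [ascentsBefore]
  | succ i ih =>
    have hsucc := ascentsBefore_succ w i
    have hlt : b i.castSucc < b i.succ := hb i.castSucc_lt_succ
    simp only [Fin.val_castSucc, Fin.val_succ] at *
    split_ifs at hsucc <;> omega

lemma monotone_sub_ascentsBefore (w : Fin (k + 1) → Fin (k + 1)) {b : Fin (k + 1) → ℕ}
    (hb : StrictMono b) : Monotone fun i ↦ b i - ascentsBefore w i := by
  rw [Fin.monotone_iff_le_succ]
  intro i
  have hsucc := ascentsBefore_succ w i
  have hlt : b i.castSucc < b i.succ := hb i.castSucc_lt_succ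
  simp only [Fin.val_castSucc, Fin.val_succ]
  split_ifs at hsucc <;> omega

lemma card_fin_orderEmbedding (n : ℕ) (α : Type*) [LinearOrder α] :
    Nat.card (Fin n ↪o α) = (Nat.card α).choose n := by
  rw [Nat.card_congr Set.powersetCard.ofFinEmbEquiv, Set.powersetCard.card]

theorem card_strictMono_toLex {w : Fin (k + 1) → Fin (k + 1)} (hw : Injective w) (M : ℕ) :
    Nat.card {a : Fin (k + 1) → Fin M // StrictMono fun i ↦ toLex (a i, w i)} =
      (M + ascentsBefore w k).choose (k + 1) := by
  have strictMono_iff (a : Fin (k + 1) → Fin M) :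
      StrictMono (fun i ↦ toLex (a i, w i)) ↔ StrictMono fun i ↦ a i + ascentsBefore w i := by
    rw [← strictMono_toLex_iff_strictMono_add_ascentsBefore hw]
    simp only [StrictMono, Prod.Lex.toLex_lt_toLex, Fin.lt_def, Fin.ext_iff]
  let shift (a : {a : Fin (k + 1) → Fin M // StrictMono fun i ↦ toLex (a i, w i)}) :
      Fin (k + 1) ↪o Fin (M + ascentsBefore w k) :=
    OrderEmbedding.ofStrictMono
      (fun i ↦ ⟨a.1 i + ascentsBefore w i,
        add_lt_add_of_lt_of_le (a.1 i).isLt (ascentsBefore_mono w i.is_le)⟩)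
      ((strictMono_iff a.1).1 a.2)
  have shift_injective : Injective shift := fun a a' h ↦ by
    ext i
    exact Nat.add_right_cancel (congrArg Fin.val (DFunLike.congr_fun h i))
  have shift_surjective : Surjective shift := fun b ↦ by
    have hb : StrictMono fun i ↦ (b i : ℕ) := b.strictMono
    have hle := ascentsBefore_le_of_strictMono w hb
    have hlt (i : Fin (k + 1)) : (b i : ℕ) - ascentsBefore w i < M := by
      have hi := monotone_sub_ascentsBefore w hb i.le_last
      have hlast := (b (Fin.last k)).isLt
      have hasc := hle (Fin.last k)
      simp only [Fin.val_last] at hi hasc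
      omega
    refine ⟨⟨fun i ↦ ⟨b i - ascentsBefore w i, hlt i⟩, ?_⟩, ?_⟩
    · rw [strictMono_iff]
      simpa only [Nat.sub_add_cancel (hle _)] using hb
    · ext i
      exact Nat.sub_add_cancel (hle i)
  rw [Nat.card_eq_of_bijective shift ⟨shift_injective, shift_surjective⟩,
    card_fin_orderEmbedding, Nat.card_fin]

end Words

section OrderPolynomial

/-- The order polynomial of `Q` at `M`: the number of monotone maps from `Q` to an `M`-chain. -/
noncomputable def orderPoly (Q : Type*) [Preorder Q] (M : ℕ) : ℕ :=
  Nat.card {f : Q → Fin M // Monotone f}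

/-- The strict order polynomial of `Q` at `M`: the number of strictly monotone maps from `Q` to an
`M`-chain. -/
noncomputable def strictOrderPoly (Q : Type*) [Preorder Q] (M : ℕ) : ℕ :=
  Nat.card {f : Q → Fin M // StrictMono f}

open Classical in
/-- The linear extensions of `Q`, as strictly monotone bijections to the chain `Fin n`. -/
noncomputable def linearExtensions (Q : Type*) [Fintype Q] [Preorder Q] (n : ℕ) :
    Finset (Q ≃ Fin n) :=
  {e | StrictMono e}

variable {Q : Type*}

lemma mem_linearExtensions [Fintype Q] [Preorder Q] {n : ℕ} {e : Q ≃ Fin n} :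
    e ∈ linearExtensions Q n ↔ StrictMono e := by
  simp [linearExtensions]

theorem existsUnique_equiv_fin_strictMono_comp_symm [Fintype Q] {n : ℕ}
    (hcard : Fintype.card Q = n) {α : Type*} [LinearOrder α] {φ : Q → α} (hφ : Injective φ) :
    ∃! e : Q ≃ Fin n, StrictMono (φ ∘ e.symm) := by
  let _ : LinearOrder Q := LinearOrder.lift' φ hφ
  refine ⟨(Fintype.orderIsoFinOfCardEq Q hcard).symm.toEquiv,
    (Fintype.orderIsoFinOfCardEq Q hcard).strictMono, fun e he ↦ ?_⟩
  refine Equiv.symm_bijective.injective (DFunLike.coe_injective (hφ.comp_left ?_))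
  refine (he.range_inj (Fintype.orderIsoFinOfCardEq Q hcard).strictMono).1 ?_
  exact (e.symm.surjective.range_comp φ).trans
    ((Fintype.orderIsoFinOfCardEq Q hcard).surjective.range_comp φ).symm

section

variable [PartialOrder Q] {α β : Type*} [PartialOrder α] [Preorder β]

lemma strictMono_toLex_iff_monotone {σ : Q → β} (hσ : StrictMono σ) (f : Q → α) :
    StrictMono (fun q ↦ toLex (f q, σ q)) ↔ Monotone f :=
  ⟨fun h ↦ Prod.Lex.monotone_fst_ofLex.comp h.monotone,
    fun h ↦ Prod.Lex.toLex_strictMono.comp fun _ _ hq ↦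
      Prod.mk_lt_mk.2 (.inr ⟨h hq.le, hσ hq⟩)⟩

lemma strictMono_toLex_iff_strictMono {σ : Q → β} (hσ : StrictAnti σ) (f : Q → α) :
    StrictMono (fun q ↦ toLex (f q, σ q)) ↔ StrictMono f := by
  refine forall₃_congr fun q q' hq ↦ ?_
  simp [Prod.Lex.toLex_lt_toLex, (hσ hq).not_gt]

end

variable [Fintype Q] [PartialOrder Q] {k : ℕ}

/-- The fundamental lemma of `(P, ω)`-partitions. -/
theorem card_strictMono_toLex_eq_sum (σ : Q ≃ Fin (k + 1)) (M : ℕ) :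
    Nat.card {f : Q → Fin M // StrictMono fun q ↦ toLex (f q, σ q)} =
      ∑ e ∈ linearExtensions Q (k + 1), (M + ascentsBefore (σ ∘ e.symm) k).choose (k + 1) := by
  let φ (f : Q → Fin M) (q : Q) : Fin M ×ₗ Fin (k + 1) := toLex (f q, σ q)
  have hsort (f : Q → Fin M) : ∃! e : Q ≃ Fin (k + 1), StrictMono (φ f ∘ e.symm) :=
    existsUnique_equiv_fin_strictMono_comp_symm (by simpa using Fintype.card_congr σ)
      fun q q' h ↦ σ.injective (congrArg (fun p ↦ (ofLex p).2) h)
  let forget (p : Σ e : linearExtensions Q (k + 1), {f // StrictMono (φ f ∘ e.1.symm)}) :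
      {f // StrictMono (φ f)} :=
    ⟨p.2.1, by simpa [comp_def] using p.2.2.comp (mem_linearExtensions.1 p.1.2)⟩
  have forget_bijective : Bijective forget := by
    constructor
    · rintro ⟨⟨e, he⟩, f, hf⟩ ⟨⟨e', he'⟩, f', hf'⟩ h
      obtain rfl : f = f' := congrArg Subtype.val h
      obtain rfl : e = e' := (hsort f).unique hf hf'
      rfl
    · rintro ⟨f, hf⟩
      obtain ⟨e, he, -⟩ := hsort f
      have he_mono : StrictMono e := fun q q' hq ↦ he.lt_iff_lt.1 (by simpa using hf hq)
      exact ⟨⟨⟨e, mem_linearExtensions.2 he_mono⟩, f, he⟩, rfl⟩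
  rw [← Nat.card_eq_of_bijective forget forget_bijective, Nat.card_sigma,
    ← sum_coe_sort (linearExtensions Q (k + 1))]
  refine sum_congr rfl fun e _ ↦ ?_
  rw [← card_strictMono_toLex (σ.injective.comp e.1.symm.injective)]
  exact Nat.card_congr
    ((e.1.arrowCongr (Equiv.refl (Fin M))).subtypeEquiv fun f ↦ Iff.rfl)

theorem orderPoly_eq_sum {ω : Q ≃ Fin (k + 1)} (hω : StrictMono ω) (M : ℕ) :
    orderPoly Q M =
      ∑ e ∈ linearExtensions Q (k + 1), (M + k - desCount (ω ∘ e.symm)).choose (k + 1) := by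
  rw [orderPoly, Nat.card_congr (Equiv.subtypeEquivRight fun f ↦
    (strictMono_toLex_iff_monotone hω f).symm), card_strictMono_toLex_eq_sum]
  refine sum_congr rfl fun e _ ↦ congrArg (Nat.choose · (k + 1)) ?_
  have := desCount_add_ascentsBefore (ω.injective.comp e.symm.injective)
  omega

theorem strictOrderPoly_eq_sum {ω : Q ≃ Fin (k + 1)} (hω : StrictMono ω) (M : ℕ) :
    strictOrderPoly Q M =
      ∑ e ∈ linearExtensions Q (k + 1), (M + desCount (ω ∘ e.symm)).choose (k + 1) := by
  have hrev : StrictAnti (ω.trans Fin.revPerm) := Fin.rev_strictAnti.comp_strictMono hω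
  rw [strictOrderPoly, Nat.card_congr (Equiv.subtypeEquivRight fun f ↦
    (strictMono_toLex_iff_strictMono hrev f).symm), card_strictMono_toLex_eq_sum]
  refine sum_congr rfl fun e _ ↦ congrArg (fun a ↦ (M + a).choose (k + 1)) ?_
  exact ascentsBefore_rev_comp (ω ∘ e.symm)

end OrderPolynomial

section Rank

lemma lt_of_monotone_of_isChain {α β : Type*} [Preorder α] [Preorder β] {f : α → β}
    (hf : Monotone f) {s : Set α} (hs : IsChain (· ≤ ·) s) {x y : α} (hx : x ∈ s) (hy : y ∈ s)
    (h : f x < f y) : x < y :=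
  hs.lt_of_not_ge hy hx fun hyx ↦ (hf hyx).not_gt h

variable {Q : Type*} [PartialOrder Q] {l : ℕ}

lemma injOn_of_strictMono_of_isChain {β : Type*} [Preorder β] {f : Q → β} (hf : StrictMono f)
    {s : Set Q} (hs : IsChain (· ≤ ·) s) : s.InjOn f := by
  intro x hx y hy hxy
  by_contra hne
  rcases hs.lt_of_le hx hy hne with h | h
  · exact (hf h).ne hxy
  · exact (hf h).ne' hxy

theorem strictOrderPoly_eq_zero_of_isChain {s : Set Q} (hs : IsChain (· ≤ ·) s) {M : ℕ}
    (hM : M < s.ncard) : strictOrderPoly Q M = 0 := by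
  have : IsEmpty {f : Q → Fin M // StrictMono f} := ⟨fun ⟨f, hf⟩ ↦ by
    have hle := Set.ncard_le_card (f '' s)
    rw [(injOn_of_strictMono_of_isChain hf hs).ncard_image, Nat.card_fin] at hle
    exact hle.not_gt hM⟩
  exact Nat.card_of_isEmpty

/-- The rank of an element of a finite poset, as a natural number: the maximal length of a chain
with greatest element `q`. -/
noncomputable def posetRank (q : Q) : ℕ :=
  (Order.height q).toNat

/-- `Q` is graded of length `l`: all its maximal chains have `l + 1` elements. -/
def IsGradedOfLength (Q : Type*) [PartialOrder Q] (l : ℕ) : Prop :=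
  ∀ s : Set Q, IsMaxChain (· ≤ ·) s → s.ncard = l + 1

variable [Finite Q]

lemma coe_posetRank (q : Q) : (posetRank q : ℕ∞) = Order.height q := by
  have := Fintype.ofFinite Q
  refine ENat.natCast_toNat fun htop ↦ ?_
  obtain ⟨p, -, hp⟩ := Order.height_eq_top_iff.1 htop (Fintype.card Q)
  exact p.length_lt_card.ne hp

lemma posetRank_strictMono : StrictMono (posetRank : Q → ℕ) := fun q q' h ↦ by
  have := Order.height_add_one_le h
  rw [← coe_posetRank, ← coe_posetRank] at this
  exact_mod_cast this

lemma posetRank_le_of_strictMono {g : Q → ℕ} (hg : StrictMono g) (q : Q) : posetRank q ≤ g q := by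
  have := Order.height_le_height_apply_of_strictMono g hg q
  rw [← coe_posetRank, Order.height_nat] at this
  exact_mod_cast this

lemma posetRank_eq_zero {q : Q} : posetRank q = 0 ↔ IsMin q := by
  rw [← Order.height_eq_zero, ← coe_posetRank, Nat.cast_eq_zero]

lemma posetRank_le_of_mem_upperBounds
    (hl : l ∈ upperBounds {m | ∃ s : Set Q, IsChain (· ≤ ·) s ∧ s.ncard = m + 1}) (q : Q) :
    posetRank q ≤ l := by
  suffices Order.height q ≤ l by
    rw [← coe_posetRank] at this
    exact_mod_cast this
  refine Order.height_le fun p _ ↦ Nat.cast_le.2 (hl ⟨Set.range p, ?_, ?_⟩)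
  · exact p.strictMono.monotone.isChain_range
  · rw [← Nat.card_coe_set_eq, Nat.card_range_of_injective p.strictMono.injective, Nat.card_fin]

lemma ncard_eq_iff_image_posetRank_eq {s : Set Q} (hs : IsChain (· ≤ ·) s)
    (hl : ∀ q ∈ s, posetRank q ≤ l) : s.ncard = l + 1 ↔ posetRank '' s = Set.Iic l := by
  have hIic : (Set.Iic l).ncard = l + 1 := by
    rw [← Finset.coe_Iic, Set.ncard_coe_finset, Nat.card_Iic]
  rw [← (injOn_of_strictMono_of_isChain posetRank_strictMono hs).ncard_image, ← hIic]
  exact ⟨fun h ↦ Set.eq_of_subset_of_ncard_le (Set.image_subset_iff.2 hl) h.ge,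
    congrArg Set.ncard⟩

lemma IsGradedOfLength.exists_posetRank_eq (hl : ∀ q : Q, posetRank q ≤ l)
    (hQ : IsGradedOfLength Q l) {s : Set Q} (hs : IsMaxChain (· ≤ ·) s) {i : ℕ} (hi : i ≤ l) :
    ∃ z ∈ s, posetRank z = i :=
  ((ncard_eq_iff_image_posetRank_eq hs.1 fun q _ ↦ hl q).1 (hQ s hs)).ge hi

lemma IsGradedOfLength.posetRank_eq_of_covBy (hl : ∀ q : Q, posetRank q ≤ l)
    (hQ : IsGradedOfLength Q l) {x y : Q} (hxy : x ⋖ y) : posetRank y = posetRank x + 1 := by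
  obtain ⟨s, hs, hsub⟩ := (IsChain.pair hxy.le : IsChain (· ≤ ·) {x, y}).exists_maxChain
  have hx : x ∈ s := hsub (Set.mem_insert x {y})
  have hy : y ∈ s := hsub (Set.mem_insert_of_mem x rfl)
  have hlt : posetRank x < posetRank y := posetRank_strictMono hxy.lt
  obtain ⟨z, hz, hzx⟩ := hQ.exists_posetRank_eq hl hs (hlt.trans_le (hl y))
  have hxz : x < z := lt_of_monotone_of_isChain posetRank_strictMono.monotone hs.1 hx hz (by omega)
  by_contra hne
  exact hxy.2 hxz (lt_of_monotone_of_isChain posetRank_strictMono.monotone hs.1 hz hy (by omega))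

lemma IsGradedOfLength.posetRank_eq_of_isMax (hl : ∀ q : Q, posetRank q ≤ l)
    (hQ : IsGradedOfLength Q l) {y : Q} (hy : IsMax y) : posetRank y = l := by
  obtain ⟨s, hs, hsub⟩ := (IsChain.singleton : IsChain (· ≤ ·) {y}).exists_maxChain
  obtain ⟨z, hz, hzl⟩ := hQ.exists_posetRank_eq hl hs le_rfl
  refine (hl y).eq_of_not_lt fun hlt ↦ hy.not_lt (b := z) ?_
  exact lt_of_monotone_of_isChain posetRank_strictMono.monotone hs.1 (hsub rfl) hz (hzl ▸ hlt)

lemma isGradedOfLength_of_covBy_of_isMax [Nonempty Q] (hl : ∀ q : Q, posetRank q ≤ l)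
    (hcov : ∀ x y : Q, x ⋖ y → posetRank y = posetRank x + 1)
    (hmax : ∀ y : Q, IsMax y → posetRank y = l) : IsGradedOfLength Q l := by
  intro s hs
  refine (ncard_eq_iff_image_posetRank_eq hs.1 fun q _ ↦ hl q).2
    (Set.Subset.antisymm (by rintro _ ⟨q, -, rfl⟩; exact hl q) fun i hi ↦ ?_)
  let F : Flag Q := Flag.ofIsMaxChain s hs
  suffices ∃ z : F, posetRank (z : Q) = i from this.elim fun z hz ↦ ⟨z, z.2, hz⟩
  have : Nonempty F := (hs.nonempty_iff.1 ‹_›).to_subtype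
  induction hi using Nat.decreasingInduction with
  | self =>
    obtain ⟨t, -, ht⟩ := (Set.toFinite (Set.univ : Set F)).exists_maximal Set.univ_nonempty
    exact ⟨t, hmax t (Flag.isMax_coe.2 fun z hz ↦ ht trivial hz)⟩
  | of_succ i _ ih =>
    obtain ⟨z, hz⟩ := ih
    have hz_min : ¬ IsMin z := by
      rw [← Flag.isMin_coe, ← posetRank_eq_zero]
      omega
    obtain ⟨t, htz⟩ := exists_covBy_of_wellFoundedGT hz_min
    have := hcov t z (Flag.coe_covBy_coe.2 htz)
    exact ⟨t, by omega⟩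

end Rank

section RankShift

variable {Q : Type*} [PartialOrder Q] [Finite Q] {l M : ℕ}

/-- Adding the rank turns a monotone map to an `M`-chain into a strictly monotone map to an
`(M + l)`-chain. -/
noncomputable def addPosetRank (hl : ∀ q : Q, posetRank q ≤ l) (M : ℕ)
    (f : {f : Q → Fin M // Monotone f}) : {g : Q → Fin (M + l) // StrictMono g} :=
  ⟨fun q ↦ ⟨f.1 q + posetRank q, add_lt_add_of_lt_of_le (f.1 q).isLt (hl q)⟩,
    fun _ _ h ↦ Fin.lt_def.2 <|
      add_lt_add_of_le_of_lt (Fin.le_def.1 (f.2 h.le)) (posetRank_strictMono h)⟩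

lemma addPosetRank_injective (hl : ∀ q : Q, posetRank q ≤ l) (M : ℕ) :
    Injective (addPosetRank hl M) := fun f f' h ↦ by
  ext q
  exact Nat.add_right_cancel (congrArg (fun g ↦ (g.1 q : ℕ)) h)

lemma orderPoly_eq_strictOrderPoly_iff_surjective (hl : ∀ q : Q, posetRank q ≤ l) :
    orderPoly Q M = strictOrderPoly Q (M + l) ↔ Surjective (addPosetRank hl M) :=
  ⟨fun h ↦ ((addPosetRank_injective hl M).bijective_of_nat_card_le h.ge).2,
    fun h ↦ Nat.card_eq_of_bijective _ ⟨addPosetRank_injective hl M, h⟩⟩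

lemma monotone_sub_posetRank (hcov : ∀ x y : Q, x ⋖ y → posetRank y = posetRank x + 1)
    {g : Q → ℕ} (hg : StrictMono g) : Monotone fun q ↦ g q - posetRank q := by
  classical
  have := Fintype.ofFinite Q
  let _ : LocallyFiniteOrder Q := Fintype.toLocallyFiniteOrder
  refine (monotone_iff_forall_covBy _).2 fun x y hxy ↦ ?_
  have := hcov x y hxy
  have := hg hxy.lt
  change g x - posetRank x ≤ g y - posetRank y
  omega

lemma IsGradedOfLength.addPosetRank_surjective (hl : ∀ q : Q, posetRank q ≤ l)
    (hQ : IsGradedOfLength Q l) (M : ℕ) : Surjective (addPosetRank hl M) := by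
  rintro ⟨g, hg⟩
  have hg' : StrictMono fun q ↦ (g q : ℕ) := hg
  have hmono := monotone_sub_posetRank (fun x y ↦ hQ.posetRank_eq_of_covBy hl) hg'
  have hle := posetRank_le_of_strictMono hg'
  have hlt (q : Q) : (g q : ℕ) - posetRank q < M := by
    obtain ⟨m, hqm, hm⟩ := Finite.exists_le_maximal (p := fun _ : Q ↦ True) (a := q) trivial
    have hrank := hQ.posetRank_eq_of_isMax hl fun b hb ↦ hm.2 trivial hb
    have := hmono hqm
    have := hle m
    have := (g m).isLt
    simp only at *
    omega
  refine ⟨⟨fun q ↦ ⟨g q - posetRank q, hlt q⟩, hmono⟩, ?_⟩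
  ext q
  exact Nat.sub_add_cancel (hle q)

lemma exists_monotone_of_addPosetRank_surjective {hl : ∀ q : Q, posetRank q ≤ l}
    (hsurj : Surjective (addPosetRank hl M)) {u : Q → ℕ}
    (hu : StrictMono fun q ↦ u q + posetRank q) (hlt : ∀ q, u q + posetRank q < M + l) :
    Monotone u ∧ ∀ q, u q < M := by
  obtain ⟨f, hf⟩ := hsurj ⟨fun q ↦ ⟨u q + posetRank q, hlt q⟩, hu⟩
  have hfu (q : Q) : (f.1 q : ℕ) = u q :=
    Nat.add_right_cancel (congrArg (fun g ↦ (g.1 q : ℕ)) hf)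
  exact ⟨fun q q' h ↦ by simpa only [hfu] using Fin.le_def.1 (f.2 h),
    fun q ↦ hfu q ▸ (f.1 q).isLt⟩

lemma posetRank_eq_of_covBy_of_surjective {hl : ∀ q : Q, posetRank q ≤ l} (hM : 2 ≤ M)
    (hsurj : Surjective (addPosetRank hl M)) {x y : Q} (hxy : x ⋖ y) :
    posetRank y = posetRank x + 1 := by
  classical
  by_contra hne
  have hrank : posetRank x < posetRank y := posetRank_strictMono hxy.lt
  let u (q : Q) : ℕ := if x ≤ q ∧ q ≠ y then 1 else 0
  have hu_le (q : Q) : u q ≤ 1 := by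
    simp only [u]
    split_ifs <;> omega
  have hu : StrictMono fun q ↦ u q + posetRank q := by
    intro q q' hq
    have hqq' : posetRank q < posetRank q' := posetRank_strictMono hq
    -- `u` drops only from elements of `[x, y)`, that is from `x`, to `y`.
    by_cases hle : u q ≤ u q'
    · exact add_lt_add_of_le_of_lt hle hqq'
    · obtain ⟨hxq, -⟩ : x ≤ q ∧ q ≠ y := by
        by_contra h
        simp [u, h] at hle
      obtain rfl : q' = y := by
        by_contra h
        exact hle ((hu_le q).trans (by simp [u, h, hxq.trans hq.le]))
      obtain rfl : x = q := hxq.eq_of_not_lt fun h ↦ hxy.2 h hq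
      have := hu_le x
      simp only
      omega
  have hmono := (exists_monotone_of_addPosetRank_surjective hsurj hu fun q ↦ by
    have := hu_le q
    have := hl q
    omega).1
  simpa [u, hxy.ne] using hmono hxy.le

lemma posetRank_eq_of_isMax_of_surjective {hl : ∀ q : Q, posetRank q ≤ l}
    (hsurj : Surjective (addPosetRank hl M)) (hM : M ≠ 0) {y : Q} (hy : IsMax y) :
    posetRank y = l := by
  classical
  by_contra hne
  let u : Q → ℕ := Pi.single y M
  have hu : StrictMono fun q ↦ u q + posetRank q := by
    intro q q' hq
    have hqy : q ≠ y := fun h ↦ hy.not_lt (h ▸ hq)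
    have := posetRank_strictMono hq
    simp only [u, Pi.single_eq_of_ne hqy]
    omega
  have hlt := (exists_monotone_of_addPosetRank_surjective hsurj hu fun q ↦ by
    have := hl q
    by_cases hqy : q = y
    · subst hqy
      simp only [u, Pi.single_eq_same]
      omega
    · simp only [u, Pi.single_eq_of_ne hqy]
      omega).2 y
  simp [u] at hlt

theorem isGradedOfLength_iff_orderPoly_eq [Nonempty Q] (hl : ∀ q : Q, posetRank q ≤ l) :
    IsGradedOfLength Q l ↔ ∀ M, orderPoly Q M = strictOrderPoly Q (M + l) := by
  simp only [orderPoly_eq_strictOrderPoly_iff_surjective hl]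
  refine ⟨fun hQ M ↦ hQ.addPosetRank_surjective hl M, fun h ↦ ?_⟩
  exact isGradedOfLength_of_covBy_of_isMax hl
    (fun x y ↦ posetRank_eq_of_covBy_of_surjective le_rfl (h 2))
    (fun y ↦ posetRank_eq_of_isMax_of_surjective (h 2) two_ne_zero)

end RankShift

section Palindromicity

variable {Q : Type*} [Fintype Q] [PartialOrder Q] {k l : ℕ}

lemma add_desCount_le {ω : Q ≃ Fin (k + 1)} (hω : StrictMono ω) {s : Set Q}
    (hs : IsChain (· ≤ ·) s) (hcard : l < s.ncard) {e : Q ≃ Fin (k + 1)}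
    (he : e ∈ linearExtensions Q (k + 1)) : l + desCount (ω ∘ e.symm) ≤ k := by
  have hzero := strictOrderPoly_eq_zero_of_isChain hs hcard
  rw [strictOrderPoly_eq_sum hω, sum_eq_zero_iff] at hzero
  exact Nat.lt_succ_iff.1 (Nat.choose_eq_zero_iff.1 (hzero e he))

lemma orderPoly_eq_strictOrderPoly_iff_card_desCount_eq {ω : Q ≃ Fin (k + 1)} (hω : StrictMono ω)
    (hdes : ∀ e ∈ linearExtensions Q (k + 1), l + desCount (ω ∘ e.symm) ≤ k) :
    (∀ M, orderPoly Q M = strictOrderPoly Q (M + l)) ↔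
      ∀ j, #{e ∈ linearExtensions Q (k + 1) | desCount (ω ∘ e.symm) = j} =
        #{e ∈ linearExtensions Q (k + 1) | k - l - desCount (ω ∘ e.symm) = j} := by
  rw [← sum_choose_eq_iff_card_fiber_eq (k := k) (fun e he ↦ by have := hdes e he; omega)
    (fun e _ ↦ by omega)]
  refine forall_congr' fun M ↦ ?_
  rw [orderPoly_eq_sum hω, strictOrderPoly_eq_sum hω]
  refine Eq.congr_right (sum_congr rfl fun e he ↦ congrArg (Nat.choose · (k + 1)) ?_)
  have := hdes e he
  omega

lemma ncard_strictMono_and_natCast_eq {n : ℕ} (d : (Q ≃ Fin n) → ℕ) (j : ℕ) :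
    {e : Q ≃ Fin n | StrictMono e ∧ (d e : ℤ) = j}.ncard =
      #{e ∈ linearExtensions Q n | d e = j} := by
  rw [← Set.ncard_coe_finset]
  simp [mem_linearExtensions]

lemma forall_ncard_strictMono_and_eq_iff {n : ℕ} {d d' : (Q ≃ Fin n) → ℕ} :
    (∀ j : ℤ, {e : Q ≃ Fin n | StrictMono e ∧ (d e : ℤ) = j}.ncard =
        {e : Q ≃ Fin n | StrictMono e ∧ (d' e : ℤ) = j}.ncard) ↔
      ∀ j, #{e ∈ linearExtensions Q n | d e = j} = #{e ∈ linearExtensions Q n | d' e = j} := by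
  simp only [← ncard_strictMono_and_natCast_eq]
  refine ⟨fun h j ↦ h j, fun h j ↦ ?_⟩
  rcases lt_or_ge j 0 with hj | hj
  · have hempty (c : (Q ≃ Fin n) → ℕ) : {e : Q ≃ Fin n | StrictMono e ∧ (c e : ℤ) = j} = ∅ :=
      Set.eq_empty_of_forall_notMem fun e he ↦ hj.not_ge (he.2 ▸ Int.natCast_nonneg (c e))
    rw [hempty, hempty]
  · lift j to ℕ using hj
    exact h j

end Palindromicity

theorem stmt17 (Q : Type) [Fintype Q] [PartialOrder Q] (n : ℕ) (hn : 1 ≤ n)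
    (hcard : Fintype.card Q = n)
    -- ω is a natural labeling: an order-preserving bijection Q → {1,…,n}
    (ω : Q ≃ Fin n) (hω : ∀ q q' : Q, q < q' → ω q < ω q')
    -- l is the maximum length of a chain in Q (a chain with m elements has length m-1)
    (l : ℕ)
    (hl : IsGreatest {m : ℕ | ∃ s : Set Q, IsChain (· ≤ ·) s ∧ s.ncard = m + 1} l) :
    -- Q is graded (every maximal chain has length l) iff the Eulerian polynomial
    -- Σ_e t^{1+des(w_e)}, summed over linear extensions e, is palindromic:
    -- #{e : des(w_e) = j} = #{e : des(w_e) = n - l - 1 - j} for every integer j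
    (∀ s : Set Q, IsMaxChain (· ≤ ·) s → s.ncard = l + 1) ↔
      ∀ j : ℤ,
        Set.ncard {e : Q ≃ Fin n |
            (∀ q q' : Q, q < q' → e q < e q') ∧ (desCount (ω ∘ e.symm) : ℤ) = j} =
        Set.ncard {e : Q ≃ Fin n |
            (∀ q q' : Q, q < q' → e q < e q') ∧
              (desCount (ω ∘ e.symm) : ℤ) = (n : ℤ) - l - 1 - j} := by
  obtain ⟨k, rfl⟩ : ∃ k, n = k + 1 := Nat.exists_eq_add_of_le' hn
  have : Nonempty Q := ⟨ω.symm 0⟩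
  obtain ⟨⟨s, hs, hs_card⟩, hl_max⟩ := hl
  have hrank : ∀ q : Q, posetRank q ≤ l := posetRank_le_of_mem_upperBounds hl_max
  have hdes := fun e he ↦ add_desCount_le (e := e) hω hs hs_card.ge he
  refine (isGradedOfLength_iff_orderPoly_eq hrank).trans
    ((orderPoly_eq_strictOrderPoly_iff_card_desCount_eq hω hdes).trans ?_)
  refine forall_ncard_strictMono_and_eq_iff.symm.trans (forall_congr' fun j ↦ ?_)
  refine Eq.congr_right (congrArg Set.ncard (Set.ext fun e ↦ and_congr_right fun he ↦ ?_))
  have := hdes e (mem_linearExtensions.2 he)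
  omega
end

section
/- For all n ≥ 1, with k = ⌈n/2⌉: the affine span of {M_σ : σ ∈ Av_n(132,312)} in ℝ^{n×n} has dimension binom(n,2), and the affine span of {M_σ : σ ∈ AltAv_n(123)} in ℝ^{n×n} has dimension binom(k,2); that is, dim B_n(132,312) = binom(n,2) and dim B̃_n(123) = binom(⌈n/2⌉,2). -/
/-- The pattern 132. -/
def p132 : Equiv.Perm (Fin 3) := Equiv.swap 1 2
/-- `Av_n(132,312)`. -/
def Av132312 (n : ℕ) : Set (Equiv.Perm (Fin n)) :=
  {σ : Equiv.Perm (Fin n) | ¬ containsPattern σ p132 ∧ ¬ containsPattern σ p312}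

/-- `σ` is alternating (up-down): zero-based, `σ(j) < σ(j+1)` for even `j` and
`σ(j) > σ(j+1)` for odd `j`. -/
def Alternating {n : ℕ} (σ : Equiv.Perm (Fin n)) : Prop :=
  ∀ (j : ℕ) (h : j + 1 < n),
    (Even j → σ ⟨j, by omega⟩ < σ ⟨j + 1, h⟩) ∧
    (Odd j → σ ⟨j + 1, h⟩ < σ ⟨j, by omega⟩)

/-- `AltAv_n(123)`: alternating permutations avoiding 123. -/
def AltAv123 (n : ℕ) : Set (Equiv.Perm (Fin n)) :=
  {σ : Equiv.Perm (Fin n) | Alternating σ ∧ ¬ containsPattern σ p123}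

/-!
In both families the direction of the affine span is coordinatised by the pairs `i < j` of indices
below `n`, respectively below `⌈n/2⌉`.

A permutation avoids 132 and 312 exactly when the values of every prefix form an interval. The
values of a prefix of length `m` therefore meet every residue class modulo `m` exactly once. These
affine relations recover, row by row, the entries on and below the diagonal of a direction vector
from those above it.

In a 123-avoiding alternating permutation the valleys decrease and the peaks decrease, so the
`n - c` values `≥ c` occupy the first `a` valleys and the first `b` peaks with `a + b = n - c`.
Hence, when `c + l + m + 1 = n`, exactly one of the `l`-th valley and the `m`-th peak has value
`≥ c`. Recording the value in each row by the indicators `[σ r ≥ c]`, this expresses the valley rows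
through the peak rows, and the `m`-th peak has only `m` indicators that are not constant.

Independence of the remaining coordinates is witnessed by differences of explicit permutations,
which are unitriangular with respect to a suitable order of the coordinates.
-/

open Finset

namespace AvoidingBirkhoff

section LinearAlgebra

variable {R E ι α : Type*} [Ring R] [AddCommGroup E] [Module R E] [Preorder α] [WellFoundedLT α]

theorem eq_top_of_unitriangular [Finite ι] (rank : ι → α) {W : Submodule R (ι → R)}
    (hW : ∀ t, ∃ w ∈ W, w t = 1 ∧ ∀ s ≠ t, w s ≠ 0 → rank s < rank t) : W = ⊤ := by
  classical
  have := Fintype.ofFinite ι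
  have single_mem (t : ι) : ∀ c : R, Pi.single t c ∈ W := by
    induction t using (InvImage.wf rank wellFounded_lt).induction with
    | _ t ih =>
      intro c
      obtain ⟨w, hw, hwt, hlow⟩ := hW t
      have hlower (s : ι) (hs : s ∈ univ.erase t) : Pi.single s ((c • w) s) ∈ W := by
        by_cases hws : w s = 0
        · simp [hws]
        · exact ih s (hlow s (ne_of_mem_erase hs) hws) _
      have hsum : Pi.single t c = c • w - ∑ s ∈ univ.erase t, Pi.single s ((c • w) s) := by
        rw [eq_sub_iff_add_eq]
        calc Pi.single t c + ∑ s ∈ univ.erase t, Pi.single s ((c • w) s)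
            = Pi.single t ((c • w) t) + ∑ s ∈ univ.erase t, Pi.single s ((c • w) s) := by
              simp [hwt]
          _ = c • w := by
              rw [add_sum_erase _ (fun s => Pi.single s ((c • w) s)) (mem_univ t),
                univ_sum_single]
      rw [hsum]
      exact W.sub_mem (W.smul_mem c hw) (sum_mem hlower)
  refine eq_top_iff.2 fun x _ => ?_
  rw [← univ_sum_single x]
  exact sum_mem fun t _ => single_mem t _

theorem map_eq_zero_of_mem_vectorSpan {F : Type*} [AddCommGroup F] [Module R F] {A : Set E}
    (f : E →ₗ[R] F) {c : F} (hf : ∀ x ∈ A, f x = c) {v : E} (hv : v ∈ vectorSpan R A) :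
    f v = 0 := by
  have hker : vectorSpan R A ≤ LinearMap.ker f := by
    rw [vectorSpan_def, Submodule.span_le]
    rintro _ ⟨x, hx, y, hy, rfl⟩
    simp [hf x hx, hf y hy]
  exact hker hv

theorem finrank_vectorSpan_eq_card [StrongRankCondition R] [Fintype ι] {A : Set E}
    (φ : E →ₗ[R] ι → R) (rank : ι → α) (hinj : ∀ v ∈ vectorSpan R A, φ v = 0 → v = 0)
    (htri : ∀ t, ∃ x ∈ A, ∃ y ∈ A, φ x t - φ y t = 1 ∧
      ∀ s ≠ t, φ x s ≠ φ y s → rank s < rank t) :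
    Module.finrank R (vectorSpan R A) = Fintype.card ι := by
  have hmap : (vectorSpan R A).map φ = ⊤ := by
    refine eq_top_of_unitriangular rank fun t => ?_
    obtain ⟨x, hx, y, hy, hone, hlow⟩ := htri t
    refine ⟨φ (x - y), Submodule.mem_map_of_mem (vsub_mem_vectorSpan R hx hy), ?_, ?_⟩
    · rwa [map_sub]
    · intro s hst hs
      rw [map_sub, Pi.sub_apply, sub_ne_zero] at hs
      exact hlow s hst hs
  have hbij : Function.Bijective (φ.domRestrict (vectorSpan R A)) := by
    constructor
    · rw [injective_iff_map_eq_zero]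
      exact fun v hv => Subtype.ext (hinj v v.2 hv)
    · rwa [← LinearMap.range_eq_top, LinearMap.range_domRestrict]
  rw [(LinearEquiv.ofBijective _ hbij).finrank_eq, Module.finrank_fintype_fun_eq_card]

end LinearAlgebra

section Counting

theorem card_subtype_fst_lt_snd (n : ℕ) :
    Fintype.card {p : Fin n × Fin n // p.1 < p.2} = n.choose 2 := by
  calc Fintype.card {p : Fin n × Fin n // p.1 < p.2}
      = ∑ i : Fin n, (n - 1 - i) := by
        rw [Fintype.card_congr (Equiv.subtypeProdEquivSigmaSubtype (· < ·)), Fintype.card_sigma]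
        refine sum_congr rfl fun i _ => ?_
        rw [Fintype.card_subtype, filter_lt_eq_Ioi, Fin.card_Ioi]
    _ = ∑ i ∈ range n, i := by
        rw [Fin.sum_univ_eq_sum_range (fun i => n - 1 - i), sum_range_reflect (fun i => i)]
    _ = n.choose 2 := by rw [sum_range_id, Nat.choose_two_right]

theorem card_filter_le_val (n c : ℕ) : #{x : Fin n | c ≤ x} = n - c := by
  have hsplit := card_filter_add_card_filter_not (s := univ) fun x : Fin n => (x : ℕ) < c
  simp only [not_lt, Fin.card_filter_val_lt, card_univ, Fintype.card_fin] at hsplit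
  omega

theorem le_apply_iff_lt_card_of_antitone {N : ℕ} {α : Type*} [Preorder α] [DecidableLE α]
    {f : Fin N → α} (hf : Antitone f) (c : α) (i : Fin N) :
    c ≤ f i ↔ (i : ℕ) < #{j | c ≤ f j} := by
  constructor
  · intro hi
    have hsub : Iic i ⊆ ({j | c ≤ f j} : Finset (Fin N)) := fun j hj =>
      mem_filter_univ j |>.2 (hi.trans (hf (mem_Iic.1 hj)))
    simpa [Fin.card_Iic, Nat.succ_le_iff] using card_le_card hsub
  · contrapose!
    intro hi
    have hsub : ({j | c ≤ f j} : Finset (Fin N)) ⊆ Iio i := fun j hj =>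
      mem_Iio.2 (lt_of_not_ge fun hij => hi ((mem_filter_univ j |>.1 hj).trans (hf hij)))
    simpa [Fin.card_Iio] using card_le_card hsub

theorem exists_eq_Ico_of_ordConnected (S : Finset ℕ) (hS : (S : Set ℕ).OrdConnected) :
    ∃ a, S = Ico a (a + #S) := by
  rcases S.eq_empty_or_nonempty with rfl | hne
  · exact ⟨0, by simp⟩
  have hIcc : S = Icc (S.min' hne) (S.max' hne) := by
    ext x
    rw [mem_Icc]
    exact ⟨fun hx => ⟨S.min'_le x hx, S.le_max' x hx⟩,
      fun hx => hS.out (S.min'_mem hne) (S.max'_mem hne) hx⟩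
  have hcard : #S = S.max' hne + 1 - S.min' hne := by
    conv_lhs => rw [hIcc]
    exact Nat.card_Icc _ _
  have hle : S.min' hne ≤ S.max' hne := S.min'_le_max' hne
  refine ⟨S.min' hne, hIcc.trans ?_⟩
  ext x
  rw [mem_Icc, mem_Ico]
  omega

theorem card_filter_mod_eq_one_of_ordConnected {S : Finset ℕ} (hS : (S : Set ℕ).OrdConnected)
    {c : ℕ} (hc : c < #S) : #{x ∈ S | x % #S = c} = 1 := by
  obtain ⟨a, ha⟩ := exists_eq_Ico_of_ordConnected S hS
  generalize #S = m at ha hc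
  subst ha
  have hmem : c ∈ (Ico a (a + m)).image (· % m) := by
    rw [Nat.image_Ico_mod]
    exact mem_range.2 hc
  obtain ⟨x, hx, hxc⟩ := mem_image.1 hmem
  refine card_eq_one.2 ⟨x, ?_⟩
  ext y
  rw [mem_filter, mem_singleton]
  constructor
  · rintro ⟨hy, hyc⟩
    exact Nat.mod_injOn_Ico a m (mem_coe.2 hy) (mem_coe.2 hx) (hyc.trans hxc.symm)
  · rintro rfl
    exact ⟨hx, hxc⟩

end Counting

section Patterns

variable {n : ℕ} {σ : Equiv.Perm (Fin n)}

theorem containsPattern_iff_strictMono {k : ℕ} {π : Equiv.Perm (Fin k)} :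
    containsPattern σ π ↔ ∃ f : Fin k → Fin n, StrictMono f ∧ StrictMono (σ ∘ f ∘ π.symm) := by
  refine exists_congr fun f => and_congr_right fun _ => ⟨fun h a b hab => ?_, fun h a b => ?_⟩
  · exact (h _ _).2 (by simpa using hab)
  · simpa using h.lt_iff_lt (a := π a) (b := π b)

theorem containsPattern_three_iff {π : Equiv.Perm (Fin 3)} :
    containsPattern σ π ↔ ∃ f : Fin 3 → Fin n, (f 0 < f 1 ∧ f 1 < f 2) ∧
      σ (f (π.symm 0)) < σ (f (π.symm 1)) ∧ σ (f (π.symm 1)) < σ (f (π.symm 2)) := by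
  simp [containsPattern_iff_strictMono, Fin.strictMono_iff_lt_succ, Fin.forall_fin_two]

theorem containsPattern_p123_iff :
    containsPattern σ p123 ↔ ∃ p q r, p < q ∧ q < r ∧ σ p < σ q ∧ σ q < σ r :=
  containsPattern_three_iff.trans
    ⟨fun ⟨f, ⟨hpq, hqr⟩, hσ⟩ => ⟨f 0, f 1, f 2, hpq, hqr, hσ⟩,
      fun ⟨p, q, r, hpq, hqr, hσ⟩ => ⟨![p, q, r], ⟨hpq, hqr⟩, hσ⟩⟩

theorem containsPattern_p132_iff :
    containsPattern σ p132 ↔ ∃ p q r, p < q ∧ q < r ∧ σ p < σ r ∧ σ r < σ q :=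
  containsPattern_three_iff.trans
    ⟨fun ⟨f, ⟨hpq, hqr⟩, hσ⟩ => ⟨f 0, f 1, f 2, hpq, hqr, hσ⟩,
      fun ⟨p, q, r, hpq, hqr, hσ⟩ => ⟨![p, q, r], ⟨hpq, hqr⟩, hσ⟩⟩

theorem containsPattern_p312_iff :
    containsPattern σ p312 ↔ ∃ p q r, p < q ∧ q < r ∧ σ q < σ r ∧ σ r < σ p :=
  containsPattern_three_iff.trans
    ⟨fun ⟨f, ⟨hpq, hqr⟩, hσ⟩ => ⟨f 0, f 1, f 2, hpq, hqr, hσ⟩,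
      fun ⟨p, q, r, hpq, hqr, hσ⟩ => ⟨![p, q, r], ⟨hpq, hqr⟩, hσ⟩⟩

end Patterns

section PermMatrix

variable {n : ℕ}

theorem sum_permMatrix (σ : Equiv.Perm (Fin n)) (S : Finset (Fin n × Fin n)) :
    ∑ p ∈ S, permMatrix σ p = #{i | (i, σ i) ∈ S} := by
  calc ∑ p ∈ S, permMatrix σ p
      = ∑ i, ∑ x, if (i, x) ∈ S then permMatrix σ (i, x) else 0 := by
        rw [← Fintype.sum_prod_type', sum_ite_mem, univ_inter]
    _ = ∑ i, if (i, σ i) ∈ S then 1 else 0 := by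
        refine sum_congr rfl fun i _ => ?_
        rw [sum_eq_single (σ i) (fun x _ hx => by simp [permMatrix, hx.symm]) (by simp)]
        simp [permMatrix]
    _ = #{i | (i, σ i) ∈ S} := by simp

theorem exists_perm_val_eq {f : Fin n → ℕ} (hlt : ∀ p, f p < n) (hf : Function.Injective f) :
    ∃ σ : Equiv.Perm (Fin n), ∀ p, (σ p : ℕ) = f p := by
  have hinj : Function.Injective fun p => (⟨f p, hlt p⟩ : Fin n) :=
    fun p q h => hf (Fin.mk.inj h)
  exact ⟨Equiv.ofBijective _ hinj.bijective_of_finite, fun p => rfl⟩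

end PermMatrix

section Av132312

variable {n : ℕ} {σ : Equiv.Perm (Fin n)}

theorem mem_Av132312_iff :
    σ ∈ Av132312 n ↔ ∀ p q r, p < r → q < r → σ p < σ r → ¬ σ r < σ q := by
  simp only [Av132312, Set.mem_ofPred_eq, containsPattern_p132_iff, containsPattern_p312_iff]
  constructor
  · rintro ⟨h132, h312⟩ p q r hp hq hpr hrq
    rcases lt_trichotomy p q with hpq | rfl | hqp
    · exact h132 ⟨p, q, r, hpq, hq, hpr, hrq⟩
    · exact lt_asymm hpr hrq
    · exact h312 ⟨q, p, r, hqp, hp, hpr, hrq⟩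
  · intro h
    constructor
    · rintro ⟨p, q, r, hpq, hqr, hpr, hrq⟩
      exact h p q r (hpq.trans hqr) hqr hpr hrq
    · rintro ⟨p, q, r, hpq, hqr, hqr', hrp⟩
      exact h q p r hqr (hpq.trans hqr) hqr' hrp

theorem ordConnected_image_Iic (hσ : σ ∈ Av132312 n) (i : Fin n) :
    ((Iic i).image fun p => (σ p : ℕ) : Set ℕ).OrdConnected := by
  rw [mem_Av132312_iff] at hσ
  refine ⟨?_⟩
  simp only [coe_image, coe_Iic, Set.mem_image, Set.mem_Iic]
  rintro _ ⟨p, hp, rfl⟩ _ ⟨q, hq, rfl⟩ z ⟨hpz, hzq⟩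
  obtain ⟨r, hr⟩ := σ.surjective ⟨z, hzq.trans_lt (σ q).2⟩
  obtain rfl : (σ r : ℕ) = z := congrArg Fin.val hr
  refine ⟨r, Set.mem_Iic.2 (not_lt.1 fun hir => ?_), rfl⟩
  have hpr : p < r := hp.trans_lt hir
  have hqr : q < r := hq.trans_lt hir
  exact hσ p q r hpr hqr (lt_of_le_of_ne hpz (σ.injective.ne hpr.ne))
    (lt_of_le_of_ne hzq (σ.injective.ne hqr.ne'))

theorem card_filter_le_and_mod_eq_one (hσ : σ ∈ Av132312 n) (i : Fin n) {c : ℕ} (hc : c ≤ i) :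
    #{p | p ≤ i ∧ (σ p : ℕ) % (i + 1) = c} = 1 := by
  have hinj : Function.Injective fun p => (σ p : ℕ) := Fin.val_injective.comp σ.injective
  have hcard : #((Iic i).image fun p => (σ p : ℕ)) = i + 1 := by
    rw [card_image_of_injective _ hinj, Fin.card_Iic]
  have hone := card_filter_mod_eq_one_of_ordConnected (c := c) (ordConnected_image_Iic hσ i)
    (by omega)
  rw [hcard, filter_image, card_image_of_injective _ hinj] at hone
  rwa [filter_and, filter_ge_eq_Iic, inter_filter, inter_univ]

theorem eq_zero_of_mem_vectorSpan_Av132312 {v : Fin n × Fin n → ℝ}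
    (hv : v ∈ vectorSpan ℝ (permMatrix '' Av132312 n)) (hup : ∀ i j, i < j → v (i, j) = 0) :
    v = 0 := by
  have hrow (i : Fin n) : ∀ j, v (i, j) = 0 := by
    induction i using WellFoundedLT.induction with
    | _ i ih =>
      intro j
      rcases lt_or_ge i j with hij | hji
      · exact hup i j hij
      let S : Finset (Fin n × Fin n) := {p | p.1 ≤ i ∧ (p.2 : ℕ) % (i + 1) = j}
      have hS : ∑ p ∈ S, v p = 0 := by
        have := map_eq_zero_of_mem_vectorSpan (∑ p ∈ S, LinearMap.proj p) (c := 1) ?_ hv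
        · simpa using this
        rintro _ ⟨σ, hσ, rfl⟩
        simp [sum_permMatrix, S, card_filter_le_and_mod_eq_one hσ i (c := j) hji]
      rwa [sum_eq_single_of_mem (i, j)] at hS
      · simp [S, Nat.mod_eq_of_lt (Nat.lt_succ_of_le hji)]
      · rintro ⟨l, x⟩ hlx hne
        obtain ⟨hli, hxj⟩ : l ≤ i ∧ (x : ℕ) % (i + 1) = j := by simpa [S] using hlx
        rcases hli.lt_or_eq with hlt | rfl
        · exact ih l hlt x
        · refine hup l x (lt_of_not_ge fun hxl => hne ?_)
          rw [Nat.mod_eq_of_lt (Nat.lt_succ_of_le hxl)] at hxj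
          rw [Fin.ext hxj]
  exact funext fun p => hrow p.1 p.2

/-- The word `a, a + 1, …, a + b - 1, a - 1, …, 1, 0, a + b, a + b + 1, …`. For `a + b ≤ n` its
first `n` letters form a permutation in `Av_n(132,312)`. -/
def riseFall (a b p : ℕ) : ℕ :=
  if p < b then a + p else if p < a + b then a + b - 1 - p else p

theorem riseFall_injective (a b : ℕ) : Function.Injective (riseFall a b) := by
  intro p q
  unfold riseFall
  split_ifs <;> omega

theorem riseFall_lt {a b p : ℕ} (hab : a + b ≤ n) (hp : p < n) : riseFall a b p < n := by
  unfold riseFall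
  split_ifs <;> omega

theorem exists_mem_Av132312_eq_riseFall {a b : ℕ} (hab : a + b ≤ n) :
    ∃ σ ∈ Av132312 n, ∀ p, (σ p : ℕ) = riseFall a b p := by
  obtain ⟨σ, hσ⟩ := exists_perm_val_eq (f := fun p : Fin n => riseFall a b p)
    (fun p => riseFall_lt hab p.2) ((riseFall_injective a b).comp Fin.val_injective)
  refine ⟨σ, mem_Av132312_iff.2 fun p q r => ?_, hσ⟩
  simp only [Fin.lt_def, hσ, riseFall]
  split_ifs <;> omega

theorem exists_mem_Av132312_agree_before {i j : Fin n} (hij : i < j) :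
    ∃ σ ∈ Av132312 n, ∃ τ ∈ Av132312 n, (∀ p < i, σ p = τ p) ∧ σ i = j ∧ τ i < j := by
  obtain ⟨σ, hσ, hσ_eq⟩ := exists_mem_Av132312_eq_riseFall (n := n) (a := j - i) (b := i + 1)
    (by omega)
  obtain ⟨τ, hτ, hτ_eq⟩ := exists_mem_Av132312_eq_riseFall (n := n) (a := j - i) (b := i)
    (by omega)
  refine ⟨σ, hσ, τ, hτ, fun p hp => ?_, ?_, ?_⟩
  · have hp : (p : ℕ) < i := hp
    rw [Fin.ext_iff, hσ_eq, hτ_eq, riseFall, riseFall, if_pos (by omega), if_pos hp]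
  · rw [Fin.ext_iff, hσ_eq, riseFall, if_pos (by omega)]
    omega
  · rw [Fin.lt_def, hτ_eq, riseFall, if_neg (by omega), if_pos (by omega)]
    omega

theorem finrank_vectorSpan_Av132312 (n : ℕ) :
    Module.finrank ℝ (vectorSpan ℝ (permMatrix '' Av132312 n)) = n.choose 2 := by
  rw [← card_subtype_fst_lt_snd]
  refine finrank_vectorSpan_eq_card
    (LinearMap.funLeft ℝ ℝ (Subtype.val : {p : Fin n × Fin n // p.1 < p.2} → Fin n × Fin n))
    (fun t => toLex (OrderDual.toDual t.1.1, t.1.2)) ?_ ?_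
  · exact fun v hv hφ => eq_zero_of_mem_vectorSpan_Av132312 hv
      fun i j hij => congrFun hφ ⟨(i, j), hij⟩
  · rintro ⟨⟨i, j⟩, hij⟩
    obtain ⟨σ, hσ, τ, hτ, hagree, hσi, hτi⟩ := exists_mem_Av132312_agree_before hij
    refine ⟨_, Set.mem_image_of_mem _ hσ, _, Set.mem_image_of_mem _ hτ, ?_, ?_⟩
    · simp [LinearMap.funLeft_apply, permMatrix, hσi, hτi.ne]
    · rintro ⟨⟨i', j'⟩, hij'⟩ hne hval
      simp only [LinearMap.funLeft_apply, permMatrix] at hval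
      simp only [Prod.Lex.toLex_lt_toLex, OrderDual.toDual_lt_toDual]
      rcases lt_trichotomy i' i with hlt | rfl | hgt
      · simp [hagree i' hlt] at hval
      · refine .inr ⟨rfl, ?_⟩
        have hj : j' ≠ j := fun h => hne (by simp [h])
        have hτj : τ i' = j' := by
          by_contra h
          simp [hσi, hj.symm, h] at hval
        exact hτj ▸ hτi
      · exact .inl hgt

end Av132312

section AltAv123

variable {n : ℕ} {σ : Equiv.Perm (Fin n)}

/-- The `l`-th local minimum position of an alternating permutation of `Fin n` that has a right
neighbour. -/
def valley (l : Fin (n / 2)) : Fin n := ⟨2 * l, by omega⟩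

/-- The position following the `m`-th valley; for odd `n` the last position, which has no right
neighbour, also counts as a peak. -/
def peak (m : Fin ((n + 1) / 2)) : Fin n := ⟨min (2 * m + 1) (n - 1), by omega⟩

theorem bijective_sumElim_valley_peak :
    Function.Bijective (Sum.elim (valley (n := n)) peak) := by
  rw [Fintype.bijective_iff_injective_and_card]
  constructor
  · rintro (l | m) (l' | m') h <;>
      simp only [Sum.elim_inl, Sum.elim_inr, valley, peak, Fin.mk.injEq] at h <;>
      simp only [Sum.inl.injEq, Sum.inr.injEq, Fin.ext_iff, reduceCtorEq] <;> omega
  · simp only [Fintype.card_sum, Fintype.card_fin]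
    omega

/-- The positions of `Fin n` split into valleys and peaks. -/
noncomputable def valleyPeakEquiv (n : ℕ) : Fin (n / 2) ⊕ Fin ((n + 1) / 2) ≃ Fin n :=
  Equiv.ofBijective _ bijective_sumElim_valley_peak

theorem exists_eq_valley_or_peak (i : Fin n) : (∃ l, valley l = i) ∨ ∃ m, peak m = i := by
  obtain ⟨l | m, h⟩ := bijective_sumElim_valley_peak.surjective i
  exacts [.inl ⟨l, h⟩, .inr ⟨m, h⟩]

theorem apply_valley_lt_apply_peak_of_alternating (hσ : Alternating σ) {l : Fin (n / 2)}
    {m : Fin ((n + 1) / 2)} (hlm : (l : ℕ) = m) : σ (valley l) < σ (peak m) := by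
  have hm : peak m = ⟨2 * l + 1, by omega⟩ := by
    rw [peak, Fin.mk.injEq]
    omega
  rw [hm]
  exact (hσ (2 * l) (by omega)).1 (even_two_mul _)

theorem strictAnti_valley_of_mem_AltAv123 (hσ : σ ∈ AltAv123 n) : StrictAnti (σ ∘ valley) := by
  intro l l' hl
  have hval : valley l < valley l' := by
    simp only [valley, Fin.mk_lt_mk]
    omega
  by_contra! hle
  let m : Fin ((n + 1) / 2) := ⟨l', by omega⟩
  have hpeak : valley l' < peak m := by
    simp only [valley, peak, Fin.mk_lt_mk, m]
    omega
  exact hσ.2 (containsPattern_p123_iff.2 ⟨valley l, valley l', peak m, hval, hpeak,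
    lt_of_le_of_ne hle (σ.injective.ne hval.ne),
    apply_valley_lt_apply_peak_of_alternating hσ.1 rfl⟩)

theorem strictAnti_peak_of_mem_AltAv123 (hσ : σ ∈ AltAv123 n) : StrictAnti (σ ∘ peak) := by
  intro m m' hm
  have hpeak : peak m < peak m' := by
    simp only [peak, Fin.mk_lt_mk]
    omega
  by_contra! hle
  let l : Fin (n / 2) := ⟨m, by omega⟩
  have hval : valley l < peak m := by
    simp only [valley, peak, Fin.mk_lt_mk, l]
    omega
  exact hσ.2 (containsPattern_p123_iff.2 ⟨valley l, peak m, peak m', hval, hpeak,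
    apply_valley_lt_apply_peak_of_alternating hσ.1 rfl,
    lt_of_le_of_ne hle (σ.injective.ne hpeak.ne)⟩)

theorem alternating_of_strictAnti (hv : StrictAnti (σ ∘ valley)) (hp : StrictAnti (σ ∘ peak))
    (hvp : ∀ (l : Fin (n / 2)) (m : Fin ((n + 1) / 2)), (l : ℕ) = m → σ (valley l) < σ (peak m)) :
    Alternating σ := by
  intro j hj
  constructor
  · intro hev
    obtain ⟨l, rfl⟩ := even_iff_exists_two_mul.1 hev
    have := hvp ⟨l, by omega⟩ ⟨l, by omega⟩ rfl
    simpa only [valley, peak, min_eq_left (Nat.le_sub_one_of_lt hj)] using this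
  · rintro ⟨l, rfl⟩
    let m : Fin ((n + 1) / 2) := ⟨l, by omega⟩
    have hm : peak m = ⟨2 * l + 1, by omega⟩ := by
      simp only [peak, Fin.mk.injEq, m]
      omega
    rw [← hm]
    rcases exists_eq_valley_or_peak ⟨2 * l + 1 + 1, hj⟩ with ⟨l', hl'⟩ | ⟨m', hm'⟩
    · have hl : (l' : ℕ) = l + 1 := by
        simp only [valley, Fin.mk.injEq] at hl'
        omega
      rw [← hl']
      exact (hv (show (⟨l, by omega⟩ : Fin (n / 2)) < l' from Fin.lt_def.2 (by simp [hl]))).trans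
        (hvp _ m rfl)
    · have hmm' : m < m' := by
        simp only [peak, Fin.mk.injEq, Fin.lt_def, m] at hm' ⊢
        omega
      rw [← hm']
      exact hp hmm'

theorem avoids_p123_of_strictAnti (hv : StrictAnti (σ ∘ valley)) (hp : StrictAnti (σ ∘ peak)) :
    ¬ containsPattern σ p123 := by
  have hval {l l'} (hpos : valley l < valley l') : σ (valley l') < σ (valley l) :=
    hv (by simp only [valley, Fin.lt_def] at hpos ⊢; omega)
  have hpeak {m m'} (hpos : peak m < peak m') : σ (peak m') < σ (peak m) :=
    hp (by simp only [peak, Fin.lt_def] at hpos ⊢; omega)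
  rw [containsPattern_p123_iff]
  rintro ⟨p, q, r, hpq, hqr, hσpq, hσqr⟩
  have hpr := hpq.trans hqr
  have hσpr := hσpq.trans hσqr
  rcases exists_eq_valley_or_peak p with ⟨_, rfl⟩ | ⟨_, rfl⟩ <;>
    rcases exists_eq_valley_or_peak q with ⟨_, rfl⟩ | ⟨_, rfl⟩ <;>
    rcases exists_eq_valley_or_peak r with ⟨_, rfl⟩ | ⟨_, rfl⟩ <;>
    first
    | exact lt_asymm hσpq (hval hpq)
    | exact lt_asymm hσpq (hpeak hpq)
    | exact lt_asymm hσqr (hval hqr)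
    | exact lt_asymm hσqr (hpeak hqr)
    | exact lt_asymm hσpr (hval hpr)
    | exact lt_asymm hσpr (hpeak hpr)

theorem mem_AltAv123_iff :
    σ ∈ AltAv123 n ↔ StrictAnti (σ ∘ valley) ∧ StrictAnti (σ ∘ peak) ∧
      ∀ (l : Fin (n / 2)) (m : Fin ((n + 1) / 2)), (l : ℕ) = m → σ (valley l) < σ (peak m) :=
  ⟨fun hσ => ⟨strictAnti_valley_of_mem_AltAv123 hσ, strictAnti_peak_of_mem_AltAv123 hσ,
      fun _ _ => apply_valley_lt_apply_peak_of_alternating hσ.1⟩,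
    fun ⟨hv, hp, hvp⟩ => ⟨alternating_of_strictAnti hv hp hvp, avoids_p123_of_strictAnti hv hp⟩⟩

theorem card_valley_add_card_peak (σ : Equiv.Perm (Fin n)) (c : ℕ) :
    #{l | c ≤ (σ (valley l) : ℕ)} + #{m | c ≤ (σ (peak m) : ℕ)} = n - c := by
  have hcard : #{t | c ≤ (σ (valleyPeakEquiv n t) : ℕ)} = n - c := by
    rw [← card_filter_le_val]
    exact card_equiv ((valleyPeakEquiv n).trans σ) (by simp)
  rw [← hcard]
  simp only [card_filter, Fintype.sum_sum_type]
  rfl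

theorem exists_valley_peak_counts (hσ : σ ∈ AltAv123 n) (c : ℕ) :
    ∃ a b, a ≤ n / 2 ∧ b ≤ (n + 1) / 2 ∧ a + b = n - c ∧
      (∀ l, c ≤ (σ (valley l) : ℕ) ↔ (l : ℕ) < a) ∧
      ∀ m, c ≤ (σ (peak m) : ℕ) ↔ (m : ℕ) < b := by
  obtain ⟨hv, hp, -⟩ := mem_AltAv123_iff.1 hσ
  refine ⟨_, _, ?_, ?_, card_valley_add_card_peak σ c,
    le_apply_iff_lt_card_of_antitone (Fin.val_strictMono.comp_strictAnti hv).antitone c,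
    le_apply_iff_lt_card_of_antitone (Fin.val_strictMono.comp_strictAnti hp).antitone c⟩
  · exact (card_le_univ _).trans_eq (Fintype.card_fin _)
  · exact (card_le_univ _).trans_eq (Fintype.card_fin _)

theorem apply_peak_add_lt (hσ : σ ∈ AltAv123 n) (m : Fin ((n + 1) / 2)) :
    (σ (peak m) : ℕ) + m < n := by
  obtain ⟨a, b, -, -, hab, -, hp⟩ := exists_valley_peak_counts hσ (σ (peak m))
  have := (hp m).1 le_rfl
  omega

theorem le_apply_peak_add (hσ : σ ∈ AltAv123 n) (m : Fin ((n + 1) / 2)) :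
    n ≤ (σ (peak m) : ℕ) + (2 * m + 1) := by
  obtain ⟨a, b, -, -, hab, hv, hp⟩ := exists_valley_peak_counts hσ (n - (2 * m + 1))
  by_contra! hlt
  have hb : ¬ (m : ℕ) < b := fun h => by
    have := (hp m).2 h
    omega
  have hlt_peak := (mem_AltAv123_iff.1 hσ).2.2 ⟨m, by omega⟩ m rfl
  have hle_valley := (hv ⟨m, by omega⟩).2 (by simp only; omega)
  rw [Fin.lt_def] at hlt_peak
  omega

theorem apply_valley_add_lt (hσ : σ ∈ AltAv123 n) (l : Fin (n / 2)) :
    (σ (valley l) : ℕ) + l < n := by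
  obtain ⟨a, b, -, -, hab, hv, -⟩ := exists_valley_peak_counts hσ (σ (valley l))
  have := (hv l).1 le_rfl
  omega

theorem le_apply_valley_add (hσ : σ ∈ AltAv123 n) (l : Fin (n / 2)) :
    n ≤ (σ (valley l) : ℕ) + (l + (n + 1) / 2 + 1) := by
  obtain ⟨a, b, -, hb, hab, hv, -⟩ :=
    exists_valley_peak_counts hσ (n - (l + (n + 1) / 2 + 1))
  have := (hv l).2 (by omega)
  omega

theorem le_apply_valley_iff_not_le_apply_peak (hσ : σ ∈ AltAv123 n) {l : Fin (n / 2)}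
    {m : Fin ((n + 1) / 2)} {c : ℕ} (hc : c + (l + m + 1) = n) :
    c ≤ (σ (valley l) : ℕ) ↔ ¬ c ≤ (σ (peak m) : ℕ) := by
  obtain ⟨a, b, -, -, hab, hv, hp⟩ := exists_valley_peak_counts hσ c
  rw [hv, hp]
  omega

/-- The linear functional summing the entries of row `r` in the columns `≥ c`. -/
noncomputable def rowTail (r : Fin n) (c : ℕ) : (Fin n × Fin n → ℝ) →ₗ[ℝ] ℝ :=
  ∑ x ∈ ({x | c ≤ (x : ℕ)} : Finset (Fin n)), LinearMap.proj (r, x)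

theorem rowTail_permMatrix (σ : Equiv.Perm (Fin n)) (r : Fin n) (c : ℕ) :
    rowTail r c (permMatrix σ) = if c ≤ (σ r : ℕ) then 1 else 0 := by
  simp [rowTail, permMatrix]

theorem rowTail_sub_rowTail_succ (r x : Fin n) (v : Fin n × Fin n → ℝ) :
    rowTail r x v - rowTail r (x + 1) v = v (r, x) := by
  have hsplit : ({y : Fin n | (x : ℕ) ≤ y} : Finset (Fin n)) =
      insert x ({y : Fin n | (x : ℕ) + 1 ≤ y} : Finset (Fin n)) := by
    ext y
    simp only [mem_filter_univ, mem_insert, Fin.ext_iff]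
    omega
  rw [rowTail, rowTail, hsplit, sum_insert (by simp)]
  simp

section UpperBound

variable {v : Fin n × Fin n → ℝ} (hv : v ∈ vectorSpan ℝ (permMatrix '' AltAv123 n))
include hv

-- The value at the `m`-th peak lies in `[n - 1 - 2 * m, n - 1 - m]`, so its row tails are constant
-- except at the `m` thresholds `n - (m + 1 + d)` with `d < m`.
theorem rowTail_peak_eq_zero
    (hφ : ∀ d m, d < m → rowTail (peak m) (n - (m + 1 + d)) v = 0)
    (m : Fin ((n + 1) / 2)) (c : ℕ) : rowTail (peak m) c v = 0 := by
  by_cases hlow : n ≤ c + m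
  · refine map_eq_zero_of_mem_vectorSpan _ (c := 0) ?_ hv
    rintro _ ⟨σ, hσ, rfl⟩
    have := apply_peak_add_lt hσ m
    rw [rowTail_permMatrix, if_neg (by omega)]
  by_cases hhigh : c + (2 * m + 1) ≤ n
  · refine map_eq_zero_of_mem_vectorSpan _ (c := 1) ?_ hv
    rintro _ ⟨σ, hσ, rfl⟩
    have := le_apply_peak_add hσ m
    rw [rowTail_permMatrix, if_pos (by omega)]
  let d : Fin ((n + 1) / 2) := ⟨n - c - m - 1, by omega⟩
  have hd : n - (m + 1 + d) = c := by
    simp only [d]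
    omega
  exact hd ▸ hφ d m (Fin.lt_def.2 (by simp only [d]; omega))

theorem rowTail_valley_eq_zero (hpeak : ∀ m c, rowTail (peak m) c v = 0) (l : Fin (n / 2))
    (c : ℕ) : rowTail (valley l) c v = 0 := by
  by_cases hlow : n ≤ c + l
  · refine map_eq_zero_of_mem_vectorSpan _ (c := 0) ?_ hv
    rintro _ ⟨σ, hσ, rfl⟩
    have := apply_valley_add_lt hσ l
    rw [rowTail_permMatrix, if_neg (by omega)]
  by_cases hhigh : c + (l + (n + 1) / 2 + 1) ≤ n
  · refine map_eq_zero_of_mem_vectorSpan _ (c := 1) ?_ hv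
    rintro _ ⟨σ, hσ, rfl⟩
    have := le_apply_valley_add hσ l
    rw [rowTail_permMatrix, if_pos (by omega)]
  let m : Fin ((n + 1) / 2) := ⟨n - c - l - 1, by omega⟩
  have hsum : (rowTail (valley l) c + rowTail (peak m) c) v = 0 := by
    refine map_eq_zero_of_mem_vectorSpan _ (c := 1) ?_ hv
    rintro _ ⟨σ, hσ, rfl⟩
    have hiff := le_apply_valley_iff_not_le_apply_peak hσ (l := l) (m := m) (c := c)
      (by simp only [m]; omega)
    rw [LinearMap.add_apply, rowTail_permMatrix, rowTail_permMatrix]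
    by_cases hc : c ≤ (σ (peak m) : ℕ) <;> simp [hiff, hc]
  rwa [LinearMap.add_apply, hpeak, add_zero] at hsum

theorem eq_zero_of_mem_vectorSpan_AltAv123
    (hφ : ∀ d m, d < m → rowTail (peak m) (n - (m + 1 + d)) v = 0) : v = 0 := by
  have hpeak := rowTail_peak_eq_zero hv hφ
  have hvalley := rowTail_valley_eq_zero hv hpeak
  ext ⟨r, x⟩
  rw [← rowTail_sub_rowTail_succ r x v]
  rcases exists_eq_valley_or_peak r with ⟨l, rfl⟩ | ⟨m, rfl⟩
  · simp [hvalley]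
  · simp [hpeak]

end UpperBound

/-- The rank, counted from the top, of the value at a valley (`inl`) or a peak (`inr`) in the
permutation whose values in decreasing order are placed on `m` peaks, then `d` valleys, then the
remaining peaks, then the remaining valleys. -/
def blockRank (n m d : ℕ) : Fin (n / 2) ⊕ Fin ((n + 1) / 2) → ℕ
  | .inl l => if (l : ℕ) < d then m + l else (n + 1) / 2 + l
  | .inr q => if (q : ℕ) < m then q else q + d

theorem blockRank_injective {m d : ℕ} (hm : m ≤ (n + 1) / 2) :
    Function.Injective (blockRank n m d) := by
  rintro (l | q) (l' | q') h <;>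
    simp only [blockRank] at h <;>
    simp only [Sum.inl.injEq, Sum.inr.injEq, Fin.ext_iff, reduceCtorEq] <;>
    split_ifs at h <;> omega

theorem blockRank_lt {m d : ℕ} (hm : m ≤ (n + 1) / 2) (hd : d ≤ n / 2)
    (t : Fin (n / 2) ⊕ Fin ((n + 1) / 2)) : blockRank n m d t < n := by
  rcases t with l | q <;> simp only [blockRank] <;> split_ifs <;> omega

theorem exists_perm_eq_blockRank {m d : ℕ} (hm : m ≤ (n + 1) / 2) (hd : d ≤ n / 2) :
    ∃ σ : Equiv.Perm (Fin n),
      (∀ l, (σ (valley l) : ℕ) = n - 1 - blockRank n m d (.inl l)) ∧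
      ∀ q, (σ (peak q) : ℕ) = n - 1 - blockRank n m d (.inr q) := by
  have hlt := blockRank_lt hm hd
  obtain ⟨σ, hσ⟩ := exists_perm_val_eq
    (f := fun i => n - 1 - blockRank n m d ((valleyPeakEquiv n).symm i))
    (fun i => by have := i.pos; omega) (fun i j hij => by
      have := hlt ((valleyPeakEquiv n).symm i)
      have := hlt ((valleyPeakEquiv n).symm j)
      simp only at hij
      exact (valleyPeakEquiv n).symm.injective (blockRank_injective (d := d) hm (by omega)))
  refine ⟨σ, fun l => ?_, fun q => ?_⟩
  · rw [hσ, show valley l = valleyPeakEquiv n (.inl l) from rfl, Equiv.symm_apply_apply]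
  · rw [hσ, show peak q = valleyPeakEquiv n (.inr q) from rfl, Equiv.symm_apply_apply]

theorem exists_mem_AltAv123_eq_blockRank {m d : ℕ} (hm : m < (n + 1) / 2) (hdm : d ≤ m) :
    ∃ σ ∈ AltAv123 n, ∀ q, (σ (peak q) : ℕ) = n - 1 - blockRank n m d (.inr q) := by
  have hd : d ≤ n / 2 := by omega
  have hlt := blockRank_lt hm.le hd
  obtain ⟨σ, hv, hp⟩ := exists_perm_eq_blockRank hm.le hd
  refine ⟨σ, mem_AltAv123_iff.2 ⟨fun l l' hl => ?_, fun q q' hq => ?_, fun l q hlq => ?_⟩, hp⟩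
  · have := hlt (.inl l')
    simp only [Function.comp_apply, Fin.lt_def, hv, blockRank] at *
    split_ifs at * <;> omega
  · have := hlt (.inr q')
    simp only [Function.comp_apply, Fin.lt_def, hp, blockRank] at *
    split_ifs at * <;> omega
  · have := hlt (.inl l)
    simp only [Fin.lt_def, hv, hp, blockRank] at *
    split_ifs at * <;> omega

theorem exists_mem_AltAv123_rowTail_peak {m d : ℕ} (hm : m < (n + 1) / 2) (hdm : d ≤ m) :
    ∃ σ ∈ AltAv123 n, ∀ e q, e < q →
      rowTail (peak q) (n - (q + 1 + e)) (permMatrix σ) =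
        if (q : ℕ) < m ∨ d ≤ (e : ℕ) then 1 else 0 := by
  obtain ⟨σ, hσ, hp⟩ := exists_mem_AltAv123_eq_blockRank hm hdm
  refine ⟨σ, hσ, fun e q heq => ?_⟩
  have hlt := blockRank_lt hm.le (show d ≤ n / 2 by omega) (.inr q)
  rw [Fin.lt_def] at heq
  rw [rowTail_permMatrix, hp]
  refine if_congr ?_ rfl rfl
  simp only [blockRank] at *
  split_ifs at * <;> omega

theorem finrank_vectorSpan_AltAv123 (n : ℕ) :
    Module.finrank ℝ (vectorSpan ℝ (permMatrix '' AltAv123 n)) = ((n + 1) / 2).choose 2 := by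
  rw [← card_subtype_fst_lt_snd]
  refine finrank_vectorSpan_eq_card
    (LinearMap.pi fun t : {p : Fin ((n + 1) / 2) × Fin ((n + 1) / 2) // p.1 < p.2} =>
      rowTail (peak t.1.2) (n - (t.1.2 + 1 + t.1.1)))
    (fun t => OrderDual.toDual t.1.2) ?_ ?_
  · exact fun v hv hφ => eq_zero_of_mem_vectorSpan_AltAv123 hv
      fun d m hdm => congrFun hφ ⟨(d, m), hdm⟩
  · rintro ⟨⟨d, m⟩, hdm : d < m⟩
    obtain ⟨σ, hσ, hσ_tail⟩ := exists_mem_AltAv123_rowTail_peak m.2 hdm.le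
    obtain ⟨τ, hτ, hτ_tail⟩ := exists_mem_AltAv123_rowTail_peak m.2 (d := d + 1) hdm
    refine ⟨_, Set.mem_image_of_mem _ hσ, _, Set.mem_image_of_mem _ hτ, ?_, ?_⟩
    · simp [hσ_tail _ _ hdm, hτ_tail _ _ hdm]
    · rintro ⟨⟨e, q⟩, heq : e < q⟩ hne hval
      simp only [LinearMap.pi_apply, hσ_tail _ _ heq, hτ_tail _ _ heq] at hval
      rw [OrderDual.toDual_lt_toDual]
      by_contra! hqm
      rcases hqm.lt_or_eq with hqm | rfl
      · simp [Fin.lt_def.1 hqm] at hval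
      · have hed : (e : ℕ) ≠ d := fun h => hne (by simp [Fin.ext h])
        refine hval (if_congr ?_ rfl rfl)
        omega

end AltAv123

end AvoidingBirkhoff

theorem stmt18 (n : ℕ) (hn : 1 ≤ n) :
    Module.finrank ℝ ↥(vectorSpan ℝ (permMatrix '' Av132312 n)) = n.choose 2 ∧
    Module.finrank ℝ ↥(vectorSpan ℝ (permMatrix '' AltAv123 n)) = ((n + 1) / 2).choose 2 :=
  ⟨AvoidingBirkhoff.finrank_vectorSpan_Av132312 n, AvoidingBirkhoff.finrank_vectorSpan_AltAv123 n⟩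
end
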